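/- arXiv:2305.07572 — 3 statements merged into one kernel-verified Lean document; each statement's English description precedes it below -/
import Mathlib

section
/- (Joint density estimation rate for the MLE.) Let d, k0, k be positive integers with k ≥ k0, let Θ be a compact subset of ℝ^d × S_d^+ × ℝ^d × ℝ × ℝ_{>0}, let β ∈ (0, 1/k], and let G0 ∈ O_{k0,β}(Θ). There exist constants C₁, C₂, C₃ > 0 (depending only on Θ, k, β, G0) such that for every integer n ≥ 2 and every map Ĝ_n from ((ℝ^d × ℝ))^n to O_{k,β}(Θ) satisfying, for every sample s = ((x_1,y_1),…,(x_n,y_n)), Σ_{i=1}^n log p_{Ĝ_n(s)}(x_i, y_i) = sup_{G ∈ O_{k,β}(Θ)} Σ_{i=1}^n log p_G(x_i, y_i), the outer probability, under the n-fold product of the probability measure on ℝ^d × ℝ with density p_{G0}, of the event { s : V(p_{Ĝ_n(s)}, p_{G0}) > C₁ √(log n / n) } is at most C₃ · n^{−C₂}. -/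
open Matrix MeasureTheory

/-- The parameter space `ℝ^d × (d×d matrices) × ℝ^d × ℝ × ℝ` of one expert component. -/
abbrev Param (d : ℕ) : Type :=
  (Fin d → ℝ) × Matrix (Fin d) (Fin d) ℝ × (Fin d → ℝ) × ℝ × ℝ

/-- The univariate Gaussian density with mean `b` and variance `ν`. -/
noncomputable def gauss1 (y b ν : ℝ) : ℝ :=
  (2 * Real.pi * ν) ^ (-(1 : ℝ) / 2) * Real.exp (-((y - b) ^ 2) / (2 * ν))

/-- The `d`-variate Gaussian density with mean `c` and covariance matrix `Γ`. -/
noncomputable def gaussd (d : ℕ) (x c : Fin d → ℝ) (Γ : Matrix (Fin d) (Fin d) ℝ) : ℝ :=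
  (2 * Real.pi) ^ (-(d : ℝ) / 2) * Γ.det ^ (-(1 : ℝ) / 2) *
    Real.exp (-(1 / 2) * ((x - c) ⬝ᵥ (Γ⁻¹ *ᵥ (x - c))))

/-- The joint density of one component:
`F(x, y | (c, Γ, a, b, ν)) = N_d(x; c, Γ) · φ(y; aᵀx + b, ν)`. -/
noncomputable def Fcomp {d : ℕ} (θ : Param d) (x : Fin d → ℝ) (y : ℝ) : ℝ :=
  gaussd d x θ.1 θ.2.1 * gauss1 y (θ.2.2.1 ⬝ᵥ x + θ.2.2.2.1) θ.2.2.2.2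

/-- A finite mixing measure: a number of atoms together with weights and component
parameters. -/
structure Mix (d : ℕ) where
  m : ℕ
  w : Fin m → ℝ
  θ : Fin m → Param d

/-- `G ∈ O_{k,β}(Θ)`: `G` has `1 ≤ m ≤ k` pairwise distinct atoms lying in `Θ`, with
weights `≥ β` summing to one. -/
def Mix.mem {d : ℕ} (G : Mix d) (k : ℕ) (β : ℝ) (Θ : Set (Param d)) : Prop :=
  1 ≤ G.m ∧ G.m ≤ k ∧ (∀ i, G.θ i ∈ Θ) ∧ Function.Injective G.θ ∧
    (∀ i, β ≤ G.w i) ∧ ∑ i, G.w i = 1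

/-- The joint density `p_G(x, y) = Σ_i π_i F(x, y | θ_i)` of a mixing measure. -/
noncomputable def Mix.pdf {d : ℕ} (G : Mix d) (z : (Fin d → ℝ) × ℝ) : ℝ :=
  ∑ i, G.w i * Fcomp (G.θ i) z.1 z.2

/-- The total variation distance `V(p, q) = (1/2)∫|p − q|` between two densities on
`ℝ^d × ℝ`. -/
noncomputable def TV {d : ℕ} (p q : (Fin d → ℝ) × ℝ → ℝ) : ℝ :=
  (1 / 2) * ∫ z, |p z - q z|

theorem lintegral_prod_gaussianPDFReal (d : ℕ) :
    ∫⁻ x : Fin d → ℝ, ENNReal.ofReal (∏ i, ProbabilityTheory.gaussianPDFReal 0 1 (x i)) = 1 := by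
  rw [← ofReal_integral_eq_lintegral_ofReal]
  · rw [integral_fintype_prod_volume_eq_prod]
    simp [ProbabilityTheory.integral_gaussianPDFReal_eq_one]
  · exact Integrable.fintype_prod
      fun _ => ProbabilityTheory.integrable_gaussianPDFReal 0 1
  · exact ae_of_all _ fun x => Finset.prod_nonneg
      fun i _ => ProbabilityTheory.gaussianPDFReal_nonneg _ _ _

theorem exists_transpose_mul_self {d : ℕ} {P : Matrix (Fin d) (Fin d) ℝ} (hP : P.PosDef) :
    ∃ B : Matrix (Fin d) (Fin d) ℝ, P = Bᵀ * B := by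
  open scoped MatrixOrder in
  obtain ⟨B, hB⟩ := CStarAlgebra.nonneg_iff_eq_star_mul_self.mp hP.posSemidef.nonneg
  exact ⟨B, by simpa [star_eq_conjTranspose] using hB⟩

theorem gaussd_eq_det_mul_prod {d : ℕ} {Γ B : Matrix (Fin d) (Fin d) ℝ} (hΓ : 0 < Γ.det)
    (hB : Γ⁻¹ = Bᵀ * B) (x c : Fin d → ℝ) :
    gaussd d x c Γ =
      |B.det| * ∏ i, ProbabilityTheory.gaussianPDFReal 0 1 ((B *ᵥ (x - c)) i) := by
  have hdet : Γ.det ^ (-(1 : ℝ) / 2) = |B.det| := by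
    have h1 : Γ.det⁻¹ = B.det ^ 2 := by
      have := congrArg Matrix.det hB
      rw [Matrix.det_nonsing_inv, Matrix.det_mul, Matrix.det_transpose, Ring.inverse_eq_inv'] at this
      rw [this, sq]
    rw [show (-(1 : ℝ) / 2) = -(1 / 2) by ring, Real.rpow_neg hΓ.le, ← Real.inv_rpow hΓ.le, h1,
      ← Real.sqrt_eq_rpow, Real.sqrt_sq_eq_abs]
  have hq : (x - c) ⬝ᵥ (Γ⁻¹ *ᵥ (x - c)) = ∑ i, (B *ᵥ (x - c)) i ^ 2 := by
    rw [hB, ← Matrix.mulVec_mulVec, Matrix.dotProduct_mulVec, Matrix.vecMul_transpose]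
    simp [dotProduct, sq]
  simp only [gaussd, ProbabilityTheory.gaussianPDFReal, hdet, hq, Finset.prod_mul_distrib,
    ← Real.exp_sum, Finset.prod_const, Finset.card_univ, Fintype.card_fin]
  have h2 : (2 * Real.pi) ^ (-(d : ℝ) / 2) = (√(2 * Real.pi * ((1 : NNReal) : ℝ)))⁻¹ ^ d := by
    have : (0 : ℝ) ≤ 2 * Real.pi := by positivity
    rw [NNReal.coe_one, mul_one, Real.sqrt_eq_rpow, ← Real.rpow_neg this, ← Real.rpow_natCast,
      ← Real.rpow_mul this]
    congr 1; ring
  rw [h2]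
  have h3 : -(1 / 2) * ∑ i, (B *ᵥ (x - c)) i ^ 2 =
      ∑ i, -((B *ᵥ (x - c)) i - 0) ^ 2 / (2 * ((1 : NNReal) : ℝ)) := by
    rw [Finset.mul_sum]; refine Finset.sum_congr rfl fun i _ => ?_
    simp; ring
  rw [h3]; ring

theorem lintegral_gaussd {d : ℕ} {Γ : Matrix (Fin d) (Fin d) ℝ} (hΓ : Γ.PosDef)
    (c : Fin d → ℝ) : ∫⁻ x, ENNReal.ofReal (gaussd d x c Γ) = 1 := by
  obtain ⟨B, hB⟩ := exists_transpose_mul_self hΓ.inv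
  have hBdet : B.det ≠ 0 := by
    intro h
    have := hΓ.inv.det_pos
    rw [hB, Matrix.det_mul, h, mul_zero] at this
    exact lt_irrefl _ this
  let f : (Fin d → ℝ) → ENNReal :=
    fun x => ENNReal.ofReal (∏ i, ProbabilityTheory.gaussianPDFReal 0 1 (x i))
  have hf : Measurable f := by
    refine (Finset.measurable_prod _ fun i _ => ?_).ennreal_ofReal
    exact (ProbabilityTheory.measurable_gaussianPDFReal 0 1).comp (measurable_pi_apply i)
  have hT : Measurable (Matrix.toLin' B) :=
    (LinearMap.continuous_on_pi _).measurable
  calc ∫⁻ x, ENNReal.ofReal (gaussd d x c Γ)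
      = ∫⁻ x, ENNReal.ofReal |B.det| * f (Matrix.toLin' B (x - c)) := by
        refine lintegral_congr fun x => ?_
        rw [gaussd_eq_det_mul_prod hΓ.det_pos hB, ENNReal.ofReal_mul (abs_nonneg _)]
        rfl
    _ = ENNReal.ofReal |B.det| * ∫⁻ x, f (Matrix.toLin' B x) := by
        rw [lintegral_sub_right_eq_self
          (fun x => ENNReal.ofReal |B.det| * f (Matrix.toLin' B x)) c,
          lintegral_const_mul' _ _ ENNReal.ofReal_ne_top]
    _ = ENNReal.ofReal |B.det| * (ENNReal.ofReal |B.det⁻¹| * ∫⁻ x, f x) := by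
        rw [← lintegral_map hf hT, Real.map_matrix_volume_pi_eq_smul_volume_pi hBdet,
          lintegral_smul_measure, smul_eq_mul]
    _ = 1 := by
        rw [lintegral_prod_gaussianPDFReal, mul_one, ← ENNReal.ofReal_mul (abs_nonneg _), ← abs_mul,
          mul_inv_cancel₀ hBdet, abs_one, ENNReal.ofReal_one]

theorem lintegral_gauss1 (b : ℝ) {ν : ℝ} (hν : 0 < ν) :
    ∫⁻ y, ENNReal.ofReal (gauss1 y b ν) = 1 := by
  have h0 : (⟨ν, hν.le⟩ : NNReal) ≠ 0 := fun h => hν.ne' (congrArg NNReal.toReal h)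
  rw [← ProbabilityTheory.lintegral_gaussianPDFReal_eq_one b h0]
  refine lintegral_congr fun y => ?_
  have : (0 : ℝ) ≤ 2 * Real.pi * ν := by positivity
  simp only [gauss1, ProbabilityTheory.gaussianPDFReal]
  rw [show (-(1 : ℝ) / 2) = -(1 / 2) by ring, Real.rpow_neg this, ← Real.sqrt_eq_rpow]
  rfl

theorem Fcomp_pos {d : ℕ} {θ : Param d} (hΓ : θ.2.1.PosDef) (hν : 0 < θ.2.2.2.2)
    (x : Fin d → ℝ) (y : ℝ) : 0 < Fcomp θ x y := by
  have := hΓ.det_pos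
  unfold Fcomp gaussd gauss1
  positivity

theorem continuous_Fcomp {d : ℕ} (θ : Param d) :
    Continuous fun z : (Fin d → ℝ) × ℝ => Fcomp θ z.1 z.2 := by
  unfold Fcomp gaussd gauss1
  have h1 : Continuous fun z : (Fin d → ℝ) × ℝ => (z.1 - θ.1) ⬝ᵥ (θ.2.1⁻¹ *ᵥ (z.1 - θ.1)) :=
    Continuous.dotProduct (by fun_prop) (Continuous.matrix_mulVec continuous_const (by fun_prop))
  have h2 : Continuous fun z : (Fin d → ℝ) × ℝ => θ.2.2.1 ⬝ᵥ z.1 :=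
    Continuous.dotProduct continuous_const continuous_fst
  fun_prop

theorem lintegral_Fcomp {d : ℕ} {θ : Param d} (hΓ : θ.2.1.PosDef) (hν : 0 < θ.2.2.2.2) :
    ∫⁻ z : (Fin d → ℝ) × ℝ, ENNReal.ofReal (Fcomp θ z.1 z.2) = 1 := by
  rw [Measure.volume_eq_prod,
    lintegral_prod _ (continuous_Fcomp θ).measurable.ennreal_ofReal.aemeasurable]
  rw [← lintegral_gaussd hΓ θ.1]
  refine lintegral_congr fun x => ?_
  have h0 : 0 ≤ gaussd d x θ.1 θ.2.1 := by
    have := hΓ.det_pos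
    unfold gaussd
    positivity
  simp only [Fcomp, ENNReal.ofReal_mul h0]
  rw [lintegral_const_mul' _ _ ENNReal.ofReal_ne_top, lintegral_gauss1 _ hν, mul_one]

theorem integrable_Fcomp {d : ℕ} {θ : Param d} (hΓ : θ.2.1.PosDef) (hν : 0 < θ.2.2.2.2) :
    Integrable fun z : (Fin d → ℝ) × ℝ => Fcomp θ z.1 z.2 := by
  refine ⟨(continuous_Fcomp θ).aestronglyMeasurable, ?_⟩
  rw [hasFiniteIntegral_iff_ofReal (ae_of_all _ fun z => (Fcomp_pos hΓ hν _ _).le),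
    lintegral_Fcomp hΓ hν]
  exact ENNReal.one_lt_top

theorem integral_Fcomp {d : ℕ} {θ : Param d} (hΓ : θ.2.1.PosDef) (hν : 0 < θ.2.2.2.2) :
    ∫ z : (Fin d → ℝ) × ℝ, Fcomp θ z.1 z.2 = 1 := by
  rw [integral_eq_lintegral_of_nonneg_ae (ae_of_all _ fun z => (Fcomp_pos hΓ hν _ _).le)
    (continuous_Fcomp θ).aestronglyMeasurable, lintegral_Fcomp hΓ hν, ENNReal.toReal_one]

/-- The conditions on the parameters which make every component a Gaussian density. -/
def GaussianParams {d : ℕ} (Θ : Set (Param d)) : Prop :=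
  ∀ θ ∈ Θ, θ.2.1.PosDef ∧ 0 < θ.2.2.2.2

section Mixture

variable {d k : ℕ} {β : ℝ} {Θ : Set (Param d)} {G : Mix d}

theorem Mix.mem.pdf_pos (hG : G.mem k β Θ) (hΘ : GaussianParams Θ) (hβ : 0 < β)
    (z : (Fin d → ℝ) × ℝ) : 0 < G.pdf z := by
  obtain ⟨h1, -, hθ, -, hw, -⟩ := hG
  have : Nonempty (Fin G.m) := ⟨⟨0, h1⟩⟩
  exact Finset.sum_pos (fun i _ => mul_pos (hβ.trans_le (hw i))
    (Fcomp_pos (hΘ _ (hθ i)).1 (hΘ _ (hθ i)).2 _ _)) Finset.univ_nonempty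

theorem Mix.continuous_pdf (G : Mix d) : Continuous G.pdf :=
  continuous_finsetSum _ fun i _ => continuous_const.mul (continuous_Fcomp (G.θ i))

theorem Mix.mem.integrable_pdf (hG : G.mem k β Θ) (hΘ : GaussianParams Θ) :
    Integrable G.pdf :=
  integrable_finsetSum _ fun i _ =>
    (integrable_Fcomp (hΘ _ (hG.2.2.1 i)).1 (hΘ _ (hG.2.2.1 i)).2).const_mul _

theorem Mix.mem.integral_pdf (hG : G.mem k β Θ) (hΘ : GaussianParams Θ) :
    ∫ z, G.pdf z = 1 := by
  have h := fun i => hΘ _ (hG.2.2.1 i)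
  simp only [Mix.pdf]
  rw [integral_finsetSum _ fun i _ => (integrable_Fcomp (h i).1 (h i).2).const_mul _]
  simp only [integral_const_mul, integral_Fcomp (h _).1 (h _).2, mul_one]
  exact hG.2.2.2.2.2

end Mixture

/-- The vector `(1, y, x)` attached to an observation `z = (x, y)`. -/
def augment {d : ℕ} (z : (Fin d → ℝ) × ℝ) : Option (Option (Fin d)) → ℝ
  | none => 1
  | some none => z.2
  | some (some i) => z.1 i

theorem abs_augment_le {d : ℕ} (z : (Fin d → ℝ) × ℝ) (i : Option (Option (Fin d))) :
    |augment z i| ≤ 1 + ‖z‖ := by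
  match i with
  | none => simp [augment]
  | some none =>
    have := norm_snd_le z
    rw [Real.norm_eq_abs] at this
    simp only [augment]; linarith
  | some (some i) =>
    have h1 := norm_fst_le z
    have h2 := norm_le_pi_norm z.1 i
    rw [Real.norm_eq_abs] at h2
    simp only [augment]; linarith

/-- `g θ z` is affine in `z`, with coefficients continuous in `θ ∈ Θ`. -/
def AffineIn {d : ℕ} (Θ : Set (Param d)) (g : Param d → (Fin d → ℝ) × ℝ → ℝ) : Prop :=
  ∃ α : Param d → Option (Option (Fin d)) → ℝ, (∀ i, ContinuousOn (α · i) Θ) ∧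
    ∀ θ ∈ Θ, ∀ z, g θ z = ∑ i, α θ i * augment z i

/-- `g θ z` is quadratic in `z`, with coefficients continuous in `θ ∈ Θ`. -/
def QuadraticIn {d : ℕ} (Θ : Set (Param d)) (g : Param d → (Fin d → ℝ) × ℝ → ℝ) : Prop :=
  ∃ η : Param d → Option (Option (Fin d)) × Option (Option (Fin d)) → ℝ,
    (∀ i, ContinuousOn (η · i) Θ) ∧
    ∀ θ ∈ Θ, ∀ z, g θ z = ∑ i, η θ i * (augment z i.1 * augment z i.2)

section Quadratic

variable {d : ℕ} {Θ : Set (Param d)} {f g : Param d → (Fin d → ℝ) × ℝ → ℝ}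

theorem QuadraticIn.add (hf : QuadraticIn Θ f) (hg : QuadraticIn Θ g) :
    QuadraticIn Θ fun θ z => f θ z + g θ z := by
  obtain ⟨η, hη, hf⟩ := hf
  obtain ⟨ξ, hξ, hg⟩ := hg
  refine ⟨fun θ i => η θ i + ξ θ i, fun i => (hη i).add (hξ i), fun θ hθ z => ?_⟩
  simp only [hf θ hθ, hg θ hθ, add_mul, Finset.sum_add_distrib]

theorem QuadraticIn.sum {ι : Type*} (s : Finset ι) {f : ι → Param d → (Fin d → ℝ) × ℝ → ℝ}
    (hf : ∀ i, QuadraticIn Θ (f i)) : QuadraticIn Θ fun θ z => ∑ i ∈ s, f i θ z := by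
  classical
  induction s using Finset.induction_on with
  | empty => exact ⟨0, fun _ => continuousOn_const, fun θ _ z => by simp⟩
  | insert a s ha ih => simpa only [Finset.sum_insert ha] using (hf a).add ih

theorem AffineIn.mul (hf : AffineIn Θ f) (hg : AffineIn Θ g) {c : Param d → ℝ}
    (hc : ContinuousOn c Θ) : QuadraticIn Θ fun θ z => c θ * (f θ z * g θ z) := by
  obtain ⟨η, hη, hf⟩ := hf
  obtain ⟨ξ, hξ, hg⟩ := hg
  refine ⟨fun θ i => c θ * (η θ i.1 * ξ θ i.2), fun i => hc.mul ((hη _).mul (hξ _)),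
    fun θ hθ z => ?_⟩
  simp only [hf θ hθ, hg θ hθ]
  rw [Finset.sum_mul_sum, Finset.mul_sum, Fintype.sum_prod_type]
  refine Finset.sum_congr rfl fun i _ => ?_
  rw [Finset.mul_sum]
  refine Finset.sum_congr rfl fun j _ => ?_
  ring

theorem affineIn_one : AffineIn Θ fun _ _ => 1 :=
  ⟨fun _ i => if i = none then 1 else 0, fun _ => continuousOn_const, fun θ _ z => by
    simp [augment]⟩

theorem affineIn_coord_sub (i : Fin d) : AffineIn Θ fun θ z => z.1 i - θ.1 i := by
  refine ⟨fun θ j => match j with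
    | none => -θ.1 i
    | some none => 0
    | some (some l) => if l = i then 1 else 0, fun j => ?_, fun θ _ z => ?_⟩
  · match j with
    | none => exact Continuous.continuousOn (by fun_prop)
    | some none => exact continuousOn_const
    | some (some l) => exact continuousOn_const
  · simp [Fintype.sum_option, augment]; ring

theorem affineIn_residual :
    AffineIn Θ fun θ z => z.2 - (θ.2.2.1 ⬝ᵥ z.1 + θ.2.2.2.1) := by
  refine ⟨fun θ j => match j with
    | none => -θ.2.2.2.1
    | some none => 1
    | some (some l) => -θ.2.2.1 l, fun j => ?_, fun θ _ z => ?_⟩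
  · match j with
    | none => exact Continuous.continuousOn (by fun_prop)
    | some none => exact continuousOn_const
    | some (some l) => exact Continuous.continuousOn (by fun_prop)
  · simp [Fintype.sum_option, augment, dotProduct]; ring

theorem continuousOn_inv_apply (hΘ : GaussianParams Θ) (i j : Fin d) :
    ContinuousOn (fun θ : Param d => θ.2.1⁻¹ i j) Θ := by
  simp only [Matrix.inv_def, Ring.inverse_eq_inv', Matrix.smul_apply, smul_eq_mul]
  have h1 : Continuous fun θ : Param d => θ.2.1.det := Continuous.matrix_det (by fun_prop)
  have h2 : Continuous fun θ : Param d => θ.2.1.adjugate :=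
    Continuous.matrix_adjugate (by fun_prop)
  exact (h1.continuousOn.inv₀ fun θ hθ => (hΘ θ hθ).1.det_pos.ne').mul
    (h2.matrix_elem i j).continuousOn

theorem continuousOn_log_normalizer (hΘ : GaussianParams Θ) :
    ContinuousOn (fun θ : Param d => Real.log ((2 * Real.pi) ^ (-(d : ℝ) / 2) *
      θ.2.1.det ^ (-(1 : ℝ) / 2) * (2 * Real.pi * θ.2.2.2.2) ^ (-(1 : ℝ) / 2))) Θ := by
  have h1 : Continuous fun θ : Param d => θ.2.1.det := Continuous.matrix_det (by fun_prop)
  have h2 : Continuous fun θ : Param d => 2 * Real.pi * θ.2.2.2.2 := by fun_prop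
  have p1 : ∀ θ ∈ Θ, 0 < θ.2.1.det := fun θ hθ => (hΘ θ hθ).1.det_pos
  have p2 : ∀ θ ∈ Θ, 0 < 2 * Real.pi * θ.2.2.2.2 := fun θ hθ => by
    have := (hΘ θ hθ).2
    positivity
  refine ContinuousOn.log ?_ fun θ hθ => ?_
  · exact (continuousOn_const.mul (h1.continuousOn.rpow_const fun θ hθ => .inl (p1 θ hθ).ne')).mul
      (h2.continuousOn.rpow_const fun θ hθ => .inl (p2 θ hθ).ne')
  · have := p1 θ hθ
    have := p2 θ hθ
    positivity

theorem log_Fcomp (hΘ : GaussianParams Θ) {θ : Param d} (hθ : θ ∈ Θ) (z : (Fin d → ℝ) × ℝ) :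
    Real.log (Fcomp θ z.1 z.2) =
      Real.log ((2 * Real.pi) ^ (-(d : ℝ) / 2) *
        θ.2.1.det ^ (-(1 : ℝ) / 2) * (2 * Real.pi * θ.2.2.2.2) ^ (-(1 : ℝ) / 2)) +
      (-(1 / 2) * ((z.1 - θ.1) ⬝ᵥ (θ.2.1⁻¹ *ᵥ (z.1 - θ.1))) +
      -(1 / (2 * θ.2.2.2.2)) * ((z.2 - (θ.2.2.1 ⬝ᵥ z.1 + θ.2.2.2.1)) *
        (z.2 - (θ.2.2.1 ⬝ᵥ z.1 + θ.2.2.2.1)))) := by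
  have p1 := (hΘ θ hθ).1.det_pos
  have p2 := (hΘ θ hθ).2
  have e : Fcomp θ z.1 z.2 = ((2 * Real.pi) ^ (-(d : ℝ) / 2) *
        θ.2.1.det ^ (-(1 : ℝ) / 2) * (2 * Real.pi * θ.2.2.2.2) ^ (-(1 : ℝ) / 2)) *
      Real.exp (-(1 / 2) * ((z.1 - θ.1) ⬝ᵥ (θ.2.1⁻¹ *ᵥ (z.1 - θ.1))) +
      -(1 / (2 * θ.2.2.2.2)) * ((z.2 - (θ.2.2.1 ⬝ᵥ z.1 + θ.2.2.2.1)) *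
        (z.2 - (θ.2.2.1 ⬝ᵥ z.1 + θ.2.2.2.1)))) := by
    rw [Real.exp_add, show -(1 / (2 * θ.2.2.2.2)) * ((z.2 - (θ.2.2.1 ⬝ᵥ z.1 + θ.2.2.2.1)) *
        (z.2 - (θ.2.2.1 ⬝ᵥ z.1 + θ.2.2.2.1))) =
        -((z.2 - (θ.2.2.1 ⬝ᵥ z.1 + θ.2.2.2.1)) ^ 2) / (2 * θ.2.2.2.2) by ring]
    simp only [Fcomp, gaussd, gauss1]
    ring
  rw [e, Real.log_mul (by positivity) (by positivity), Real.log_exp]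

theorem quadraticIn_log_Fcomp (hΘ : GaussianParams Θ) :
    QuadraticIn Θ fun θ z => Real.log (Fcomp θ z.1 z.2) := by
  have hq : QuadraticIn Θ fun θ z =>
      ∑ i, ∑ j, (-(1 / 2) * θ.2.1⁻¹ i j) * ((z.1 i - θ.1 i) * (z.1 j - θ.1 j)) :=
    QuadraticIn.sum _ fun i => QuadraticIn.sum _ fun j =>
      (affineIn_coord_sub i).mul (affineIn_coord_sub j)
        (continuousOn_const.mul (continuousOn_inv_apply hΘ i j))
  have hν : ContinuousOn (fun θ : Param d => -(1 / (2 * θ.2.2.2.2))) Θ := by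
    refine ContinuousOn.neg (continuousOn_const.div (Continuous.continuousOn (by fun_prop)) ?_)
    intro θ hθ
    have := (hΘ θ hθ).2
    positivity
  obtain ⟨η, hη, h⟩ := ((affineIn_one.mul affineIn_one (continuousOn_log_normalizer hΘ)).add
    (hq.add (affineIn_residual.mul affineIn_residual hν)))
  refine ⟨η, hη, fun θ hθ z => ?_⟩
  rw [← h θ hθ z]
  beta_reduce
  rw [log_Fcomp hΘ hθ, mul_one, mul_one]
  congr 2
  simp only [dotProduct, mulVec, Finset.mul_sum, Pi.sub_apply]
  refine Finset.sum_congr rfl fun i _ => Finset.sum_congr rfl fun j _ => ?_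
  ring

end Quadratic

section Tail

variable {d : ℕ} {Θ : Set (Param d)}

theorem exists_pos_le_quadraticForm (hΘc : IsCompact Θ) (hΘ : GaussianParams Θ) :
    ∃ c > 0, ∀ θ ∈ Θ, ∀ u : (Fin d → ℝ) × ℝ, c * ‖u‖ ^ 2 ≤
      u.1 ⬝ᵥ (θ.2.1⁻¹ *ᵥ u.1) / 2 + (u.2 - θ.2.2.1 ⬝ᵥ u.1) ^ 2 / (2 * θ.2.2.2.2) := by
  let Q : Param d → (Fin d → ℝ) × ℝ → ℝ := fun θ u =>
    u.1 ⬝ᵥ (θ.2.1⁻¹ *ᵥ u.1) / 2 + (u.2 - θ.2.2.1 ⬝ᵥ u.1) ^ 2 / (2 * θ.2.2.2.2)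
  let S : Set (Param d × ((Fin d → ℝ) × ℝ)) := Θ ×ˢ Metric.sphere 0 1
  have hS : IsCompact S := hΘc.prod (isCompact_sphere 0 1)
  have hinv : ContinuousOn (fun q : Param d × ((Fin d → ℝ) × ℝ) => q.1.2.1⁻¹) S := by
    refine continuousOn_pi.2 fun i => continuousOn_pi.2 fun j => ?_
    exact (continuousOn_inv_apply hΘ i j).comp continuousOn_fst fun q hq => hq.1
  have hQ : ContinuousOn (fun q : Param d × ((Fin d → ℝ) × ℝ) => Q q.1 q.2) S := by
    have h1 : ContinuousOn
        (fun q : Param d × ((Fin d → ℝ) × ℝ) => q.2.1 ⬝ᵥ (q.1.2.1⁻¹ *ᵥ q.2.1)) S := by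
      simp only [dotProduct, mulVec]
      refine continuousOn_finsetSum _ fun i _ => ContinuousOn.mul
        (Continuous.continuousOn (by fun_prop)) (continuousOn_finsetSum _ fun j _ => ?_)
      exact ContinuousOn.mul (continuousOn_pi.1 (continuousOn_pi.1 hinv i) j)
        (Continuous.continuousOn (by fun_prop))
    have h2 : Continuous fun q : Param d × ((Fin d → ℝ) × ℝ) => q.1.2.2.1 ⬝ᵥ q.2.1 :=
      Continuous.dotProduct (by fun_prop) (by fun_prop)
    refine (h1.div_const 2).add (ContinuousOn.div (Continuous.continuousOn (by fun_prop))
      (Continuous.continuousOn (by fun_prop)) fun q hq => ?_)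
    have := (hΘ q.1 hq.1).2
    positivity
  have hpos : ∀ q ∈ S, 0 < Q q.1 q.2 := by
    rintro ⟨θ, u⟩ ⟨hθ, hu⟩
    have hu0 : u ≠ 0 := by
      rintro rfl
      simp at hu
    have hν := (hΘ θ hθ).2
    by_cases h : u.1 = 0
    · have h2 : u.2 ≠ 0 := fun h2 => hu0 (Prod.ext h h2)
      simp only [Q, h, zero_dotProduct, dotProduct_zero, sub_zero, zero_div, zero_add]
      positivity
    · have h1 := (hΘ θ hθ).1.inv.dotProduct_mulVec_pos h
      simp only [star_trivial] at h1
      simp only [Q]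
      positivity
  have hex : ∃ c > 0, ∀ q ∈ S, c ≤ Q q.1 q.2 := by
    rcases S.eq_empty_or_nonempty with h | h
    · exact ⟨1, one_pos, by simp [h]⟩
    · obtain ⟨q, hq, hmin⟩ := hS.exists_isMinOn h hQ
      exact ⟨Q q.1 q.2, hpos q hq, fun r hr => hmin hr⟩
  obtain ⟨c, hc, hle⟩ := hex
  refine ⟨c, hc, fun θ hθ u => ?_⟩
  rcases eq_or_ne u 0 with rfl | hu
  · simp
  have hu' : 0 < ‖u‖ := norm_pos_iff.2 hu
  have h := hle (θ, ‖u‖⁻¹ • u) ⟨hθ, by simp [norm_smul, hu'.ne']⟩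
  have hs : Q θ (‖u‖⁻¹ • u) = (‖u‖⁻¹) ^ 2 * Q θ u := by
    simp only [Q, Prod.smul_fst, Prod.smul_snd, mulVec_smul, dotProduct_smul, smul_dotProduct,
      smul_eq_mul]
    ring
  rw [hs] at h
  calc c * ‖u‖ ^ 2 ≤ ((‖u‖⁻¹) ^ 2 * Q θ u) * ‖u‖ ^ 2 := by gcongr
    _ = Q θ u := by field_simp

theorem exists_Fcomp_le_exp (hΘc : IsCompact Θ) (hΘ : GaussianParams Θ) :
    ∃ K > 0, ∃ c > 0, ∀ θ ∈ Θ, ∀ z : (Fin d → ℝ) × ℝ,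
      Fcomp θ z.1 z.2 ≤ K * Real.exp (-c * ‖z‖ ^ 2) := by
  obtain ⟨c, hc, hq⟩ := exists_pos_le_quadraticForm hΘc hΘ
  obtain ⟨A, hA⟩ := hΘc.exists_bound_of_continuousOn (continuousOn_log_normalizer hΘ)
  let ctr : Param d → (Fin d → ℝ) × ℝ := fun θ => (θ.1, θ.2.2.1 ⬝ᵥ θ.1 + θ.2.2.2.1)
  have hctr : Continuous ctr := by
    have : Continuous fun θ : Param d => θ.2.2.1 ⬝ᵥ θ.1 :=
      Continuous.dotProduct (by fun_prop) (by fun_prop)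
    fun_prop
  obtain ⟨R, hR⟩ := hΘc.exists_bound_of_continuousOn hctr.continuousOn
  refine ⟨Real.exp (A + c * R ^ 2), Real.exp_pos _, c / 2, by positivity, fun θ hθ z => ?_⟩
  rw [← Real.exp_add, ← Real.exp_log (Fcomp_pos (hΘ θ hθ).1 (hΘ θ hθ).2 z.1 z.2),
    Real.exp_le_exp, log_Fcomp hΘ hθ]
  have h1 := (le_abs_self _).trans (hA θ hθ)
  have h2 := hq θ hθ (z - ctr θ)
  have h3 := hR θ hθ
  have h4 : ‖z‖ ≤ ‖z - ctr θ‖ + R := by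
    calc ‖z‖ = ‖(z - ctr θ) + ctr θ‖ := by simp
      _ ≤ _ := (norm_add_le _ _).trans (by gcongr)
  have h5 : ‖z‖ ^ 2 / 2 - R ^ 2 ≤ ‖z - ctr θ‖ ^ 2 := by
    have h6 : ‖z‖ ^ 2 ≤ (‖z - ctr θ‖ + R) ^ 2 := pow_le_pow_left₀ (norm_nonneg _) h4 2
    nlinarith [sq_nonneg (‖z - ctr θ‖ - R)]
  have h7 := mul_le_mul_of_nonneg_left h5 hc.le
  have h8 : (z - ctr θ).2 - θ.2.2.1 ⬝ᵥ (z - ctr θ).1 =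
      z.2 - (θ.2.2.1 ⬝ᵥ z.1 + θ.2.2.2.1) := by
    simp only [ctr, Prod.fst_sub, Prod.snd_sub, dotProduct_sub]
    ring
  rw [h8] at h2
  simp only [ctr, Prod.fst_sub] at h2
  have h9 : -(1 / (2 * θ.2.2.2.2)) * ((z.2 - (θ.2.2.1 ⬝ᵥ z.1 + θ.2.2.2.1)) *
        (z.2 - (θ.2.2.1 ⬝ᵥ z.1 + θ.2.2.2.1))) =
        -((z.2 - (θ.2.2.1 ⬝ᵥ z.1 + θ.2.2.2.1)) ^ 2 / (2 * θ.2.2.2.2)) := by ring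
  rw [h9]
  simp only [ctr] at h7
  linarith

theorem Mix.mem.pdf_le {k : ℕ} {β K c : ℝ} {G : Mix d} (hG : G.mem k β Θ) (hβ : 0 < β)
    (h : ∀ θ ∈ Θ, ∀ z : (Fin d → ℝ) × ℝ, Fcomp θ z.1 z.2 ≤ K * Real.exp (-c * ‖z‖ ^ 2))
    (z : (Fin d → ℝ) × ℝ) : G.pdf z ≤ K * Real.exp (-c * ‖z‖ ^ 2) := by
  obtain ⟨-, -, hθ, -, hw, hsum⟩ := hG
  calc G.pdf z ≤ ∑ i, G.w i * (K * Real.exp (-c * ‖z‖ ^ 2)) :=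
        Finset.sum_le_sum fun i _ => mul_le_mul_of_nonneg_left (h _ (hθ i) z)
          (hβ.le.trans (hw i))
    _ = K * Real.exp (-c * ‖z‖ ^ 2) := by rw [← Finset.sum_mul, hsum, one_mul]

theorem integrable_exp_neg_mul_norm_sq {c : ℝ} (hc : 0 < c) :
    Integrable fun z : (Fin d → ℝ) × ℝ => Real.exp (-c * ‖z‖ ^ 2) := by
  let r : ℝ := c / (d + 1)
  have hr : 0 < r := by positivity
  have h1 : Integrable fun x : Fin d → ℝ => ∏ i, Real.exp (-r * x i ^ 2) :=
    Integrable.fintype_prod (f := fun _ t => Real.exp (-r * t ^ 2))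
      fun _ => integrable_exp_neg_mul_sq hr
  have h2 := h1.mul_prod (integrable_exp_neg_mul_sq hr)
  refine Integrable.mono' h2
    (Continuous.aestronglyMeasurable (by fun_prop)) (ae_of_all _ fun z => ?_)
  rw [Real.norm_eq_abs, Real.abs_exp, ← Real.exp_sum, ← Real.exp_add, Real.exp_le_exp,
    ← Finset.mul_sum]
  have hx : ∑ i, z.1 i ^ 2 ≤ d * ‖z‖ ^ 2 := by
    calc ∑ i, z.1 i ^ 2 ≤ ∑ _i : Fin d, ‖z‖ ^ 2 := by
          refine Finset.sum_le_sum fun i _ => ?_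
          rw [← sq_abs]
          exact pow_le_pow_left₀ (abs_nonneg _) ((norm_le_pi_norm z.1 i).trans (norm_fst_le z)) 2
      _ = d * ‖z‖ ^ 2 := by simp
  have hy : z.2 ^ 2 ≤ ‖z‖ ^ 2 := by
    rw [← sq_abs]
    exact pow_le_pow_left₀ (abs_nonneg _) (norm_snd_le z) 2
  have hcr : c = r * (d + 1) := by simp only [r]; field_simp
  rw [hcr]
  nlinarith

end Tail

section Cover

/-- The cell of side `1 / t` containing `v`, among the cells covering `[-R, R]`. -/
noncomputable def quantize (R t v : ℝ) : Fin (⌊2 * R * t⌋₊ + 1) :=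
  ⟨min ⌊(v + R) * t⌋₊ ⌊2 * R * t⌋₊, by omega⟩

theorem abs_sub_le_of_quantize_eq {R t u v : ℝ} (ht : 0 < t) (hu : |u| ≤ R) (hv : |v| ≤ R)
    (h : quantize R t u = quantize R t v) : |u - v| ≤ 1 / t := by
  have key : ∀ w : ℝ, |w| ≤ R → ⌊(w + R) * t⌋₊ ≤ ⌊2 * R * t⌋₊ ∧ 0 ≤ (w + R) * t := by
    intro w hw
    rw [abs_le] at hw
    refine ⟨Nat.floor_mono (by gcongr; linarith), mul_nonneg (by linarith) ht.le⟩
  obtain ⟨hu1, hu2⟩ := key u hu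
  obtain ⟨hv1, hv2⟩ := key v hv
  have he : ⌊(u + R) * t⌋₊ = ⌊(v + R) * t⌋₊ := by
    have := congrArg Fin.val h
    simpa only [quantize, min_eq_left hu1, min_eq_left hv1] using this
  have a1 := Nat.floor_le hu2
  have a2 := Nat.lt_floor_add_one ((u + R) * t)
  have b1 := Nat.floor_le hv2
  have b2 := Nat.lt_floor_add_one ((v + R) * t)
  rw [he] at a1 a2
  have ht' : |u - v| * t = |(u - v) * t| := by rw [abs_mul, abs_of_pos ht]
  rw [le_div_iff₀ ht, ht', abs_le]
  constructor <;> nlinarith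

variable {d : ℕ} {Θ : Set (Param d)}

theorem abs_augment_mul_augment_le (z : (Fin d → ℝ) × ℝ) (i j : Option (Option (Fin d))) :
    |augment z i * augment z j| ≤ 2 * (1 + ‖z‖ ^ 2) := by
  rw [abs_mul]
  calc |augment z i| * |augment z j| ≤ (1 + ‖z‖) * (1 + ‖z‖) :=
        mul_le_mul (abs_augment_le z i) (abs_augment_le z j) (abs_nonneg _) (by positivity)
    _ ≤ 2 * (1 + ‖z‖ ^ 2) := by nlinarith [sq_nonneg (1 - ‖z‖)]

theorem exists_code (hΘc : IsCompact Θ) (hΘ : GaussianParams Θ) (k : ℕ) {β s : ℝ} (hβ : 0 < β)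
    (hs : 0 < s) :
    ∃ C > (0 : ℝ), ∃ A : ℕ, ∀ n : ℕ, 1 ≤ n →
      ∃ (κ : Type) (_ : Fintype κ) (code : Mix d → κ), (Fintype.card κ : ℝ) ≤ C * (n : ℝ) ^ A ∧
        ∀ G G' : Mix d, G.mem k β Θ → G'.mem k β Θ → code G = code G' →
          ∀ z, G.pdf z ≤ Real.exp (s / n * (1 + ‖z‖ ^ 2)) * G'.pdf z := by
  obtain ⟨η, hη, hlog⟩ := quadraticIn_log_Fcomp hΘ
  beta_reduce at hlog
  choose R₀ hR₀ using fun i => hΘc.exists_bound_of_continuousOn (hη i)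
  set R : ℝ := ∑ i, |R₀ i| + |Real.log β| with hR
  set D : ℕ := Fintype.card (Option (Option (Fin d)) × Option (Option (Fin d))) with hD
  have hR0 : 0 ≤ R := by positivity
  have hηR : ∀ θ ∈ Θ, ∀ i, |η θ i| ≤ R := fun θ hθ i => by
    have h1 := (hR₀ i θ hθ).trans (le_abs_self _)
    have h2 : |R₀ i| ≤ ∑ i, |R₀ i| :=
      Finset.single_le_sum (f := fun i => |R₀ i|) (fun _ _ => abs_nonneg _) (Finset.mem_univ i)
    rw [Real.norm_eq_abs] at h1
    linarith [abs_nonneg (Real.log β)]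
  have hwR : ∀ w, β ≤ w → w ≤ 1 → |Real.log w| ≤ R := fun w h1 h2 => by
    have h3 := Real.log_le_log hβ h1
    have h4 := Real.log_nonpos (hβ.le.trans h1) h2
    rw [abs_of_nonpos h4]
    have h5 := neg_le_abs (Real.log β)
    have h6 : 0 ≤ ∑ i, |R₀ i| := by positivity
    linarith
  set B : ℝ := 2 * (D + 1) / s with hB
  have hB0 : 0 < B := by positivity
  refine ⟨(k + 1) * (2 * R * B + 1) ^ ((D + 1) * k), by positivity, (D + 1) * k, fun n hn => ?_⟩
  have hn0 : (0 : ℝ) < n := by exact_mod_cast hn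
  have hn1 : (1 : ℝ) ≤ n := by exact_mod_cast hn
  let q := quantize R (B * n)
  refine ⟨Fin (k + 1) × (Fin k → Option (Option (Option (Fin d)) × Option (Option (Fin d))) →
      Fin (⌊2 * R * (B * n)⌋₊ + 1)), inferInstance, fun G => (Fin.ofNat (k + 1) G.m, fun r j =>
      if h : r.1 < G.m then q (j.elim (Real.log (G.w ⟨r, h⟩)) fun i => η (G.θ ⟨r, h⟩) i) else 0),
    ?_, ?_⟩
  · have hN : ((⌊2 * R * (B * n)⌋₊ + 1 : ℕ) : ℝ) ≤ (2 * R * B + 1) * n := by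
      push_cast
      have := Nat.floor_le (show 0 ≤ 2 * R * (B * n) by positivity)
      linarith
    simp only [Fintype.card_prod, Fintype.card_pi, Fintype.card_fin, Finset.prod_const,
      Finset.card_univ, Fintype.card_option]
    rw [← pow_mul, Nat.cast_mul, Nat.cast_pow, mul_assoc (k + 1 : ℝ), ← mul_pow]
    have hD' : (Fintype.card (Option (Option (Fin d)) × Option (Option (Fin d))) + 1) * k =
        (D + 1) * k := rfl
    simp only [Fintype.card_prod, Fintype.card_option, Fintype.card_fin] at hD'
    rw [hD']
    push_cast
    gcongr
    exact_mod_cast hN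
  · rintro ⟨m, w, θ⟩ ⟨m', w', θ'⟩ ⟨-, hmk, hθ, -, hw, hsum⟩ ⟨-, hmk', hθ', -, hw', hsum'⟩ hcode z
    simp only at hmk hθ hw hsum hmk' hθ' hw' hsum'
    obtain ⟨hm, hcells⟩ := Prod.ext_iff.1 hcode
    obtain rfl : m = m' := by
      have := congrArg Fin.val hm
      simpa [Fin.val_ofNat, Nat.mod_eq_of_lt (Nat.lt_succ_of_le hmk),
        Nat.mod_eq_of_lt (Nat.lt_succ_of_le hmk')] using this
    have hcell : ∀ (r : Fin m) (j : Option _),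
        q (j.elim (Real.log (w r)) fun i => η (θ r) i) =
          q (j.elim (Real.log (w' r)) fun i => η (θ' r) i) := fun r j => by
      have := congrFun (congrFun hcells ⟨r, r.2.trans_le hmk⟩) j
      simpa using this
    have hle1 : ∀ w : Fin m → ℝ, (∀ i, β ≤ w i) → ∑ i, w i = 1 → ∀ r, w r ≤ 1 :=
      fun w hw hsum r => hsum ▸ Finset.single_le_sum (f := w)
        (fun i _ => hβ.le.trans (hw i)) (Finset.mem_univ r)
    have ht : 0 < B * n := by positivity
    have hpt : ∀ r, w r * Fcomp (θ r) z.1 z.2 ≤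
        Real.exp (s / n * (1 + ‖z‖ ^ 2)) * (w' r * Fcomp (θ' r) z.1 z.2) := fun r => by
      have hwr : 0 < w r := hβ.trans_le (hw r)
      have hwr' : 0 < w' r := hβ.trans_le (hw' r)
      have hF := Fcomp_pos (hΘ _ (hθ r)).1 (hΘ _ (hθ r)).2 z.1 z.2
      have hF' := Fcomp_pos (hΘ _ (hθ' r)).1 (hΘ _ (hθ' r)).2 z.1 z.2
      rw [← Real.log_le_log_iff (by positivity) (by positivity),
        Real.log_mul (Real.exp_pos _).ne' (by positivity), Real.log_exp, Real.log_mul hwr.ne' hF.ne',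
        Real.log_mul hwr'.ne' hF'.ne', hlog _ (hθ r) z, hlog _ (hθ' r) z]
      have h1 : Real.log (w r) - Real.log (w' r) ≤ 1 / (B * n) * (2 * (1 + ‖z‖ ^ 2)) := by
        have h2 := (le_abs_self _).trans (abs_sub_le_of_quantize_eq ht
          (hwR _ (hw r) (hle1 w hw hsum r)) (hwR _ (hw' r) (hle1 w' hw' hsum' r))
          (hcell r none))
        refine h2.trans (le_mul_of_one_le_right (by positivity) ?_)
        nlinarith [sq_nonneg ‖z‖]
      have h3 : ∑ i, η (θ r) i * (augment z i.1 * augment z i.2) -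
          ∑ i, η (θ' r) i * (augment z i.1 * augment z i.2) ≤
            D * (1 / (B * n) * (2 * (1 + ‖z‖ ^ 2))) := by
        rw [← Finset.sum_sub_distrib, hD, ← Finset.card_univ, ← nsmul_eq_mul]
        refine Finset.sum_le_card_nsmul _ _ _ fun i _ => ?_
        rw [← sub_mul]
        refine (le_abs_self _).trans ?_
        rw [abs_mul]
        exact mul_le_mul (abs_sub_le_of_quantize_eq ht (hηR _ (hθ r) i) (hηR _ (hθ' r) i)
          (hcell r (some i))) (abs_augment_mul_augment_le z _ _) (abs_nonneg _) (by positivity)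
      have h4 : s / n * (1 + ‖z‖ ^ 2) =
          1 / (B * n) * (2 * (1 + ‖z‖ ^ 2)) + D * (1 / (B * n) * (2 * (1 + ‖z‖ ^ 2))) := by
        rw [hB]; field_simp; ring
      linarith
    simp only [Mix.pdf]
    rw [Finset.mul_sum]
    exact Finset.sum_le_sum fun r _ => hpt r

end Cover

section Affinity

variable {d : ℕ} {p q : (Fin d → ℝ) × ℝ → ℝ}

theorem integrable_sqrt_mul (hp : ∀ z, 0 ≤ p z) (hq : ∀ z, 0 ≤ q z) (ip : Integrable p)
    (iq : Integrable q) : Integrable fun z => √(p z * q z) := by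
  refine Integrable.mono' (ip.add iq)
    (ip.aemeasurable.mul iq.aemeasurable).sqrt.aestronglyMeasurable (ae_of_all _ fun z => ?_)
  rw [Real.norm_eq_abs, abs_of_nonneg (Real.sqrt_nonneg _), Pi.add_apply]
  refine Real.sqrt_le_iff.2 ⟨add_nonneg (hp z) (hq z), ?_⟩
  nlinarith [hp z, hq z, mul_nonneg (hp z) (hq z), sq_nonneg (p z), sq_nonneg (q z)]

/-- The Hellinger affinity of two densities is at most `1 - V² / 2`. -/
theorem integral_sqrt_mul_le (hp : ∀ z, 0 ≤ p z) (hq : ∀ z, 0 ≤ q z) (ip : Integrable p)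
    (iq : Integrable q) (hp1 : ∫ z, p z = 1) (hq1 : ∫ z, q z = 1) (hV : 0 < TV p q) :
    ∫ z, √(p z * q z) ≤ 1 - TV p q ^ 2 / 2 := by
  have is := integrable_sqrt_mul hp hq ip iq
  set V := TV p q with hVdef
  have hpt : ∀ z, |p z - q z| ≤
      V⁻¹ * (p z + q z - 2 * √(p z * q z)) + V / 2 * (p z + q z) := fun z => by
    have ha := Real.sqrt_nonneg (p z)
    have hb := Real.sqrt_nonneg (q z)
    have ea := Real.sq_sqrt (hp z)
    have eb := Real.sq_sqrt (hq z)
    rw [Real.sqrt_mul (hp z)]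
    set a := √(p z)
    set b := √(q z)
    rw [← ea, ← eb, show a ^ 2 - b ^ 2 = (a - b) * (a + b) by ring, abs_mul,
      abs_of_nonneg (add_nonneg ha hb)]
    have h1 : 0 ≤ V⁻¹ * (|a - b| - V / 2 * (a + b)) ^ 2 := by positivity
    have h2 : V⁻¹ * (|a - b| - V / 2 * (a + b)) ^ 2 =
        V⁻¹ * (a - b) ^ 2 - |a - b| * (a + b) + V / 4 * (a + b) ^ 2 := by
      rw [sub_sq, sq_abs]; field_simp; ring
    have h3 : V / 4 * (a + b) ^ 2 ≤ V / 2 * (a ^ 2 + b ^ 2) := by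
      nlinarith [mul_nonneg hV.le (sq_nonneg (a - b))]
    have h4 : (a - b) ^ 2 = a ^ 2 + b ^ 2 - 2 * (a * b) := by ring
    rw [h4] at h2
    linarith
  have i1 : Integrable fun z => p z + q z := ip.add iq
  have i2 : Integrable fun z => p z + q z - 2 * √(p z * q z) := i1.sub (is.const_mul 2)
  have hint := integral_mono (ip.sub iq).abs ((i2.const_mul V⁻¹).add (i1.const_mul (V / 2))) hpt
  have hTV : ∫ z, |p z - q z| = 2 * V := by rw [hVdef, TV]; ring
  simp only [Pi.add_apply, Pi.sub_apply] at hint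
  rw [hTV, integral_add (i2.const_mul _) (i1.const_mul _), integral_const_mul, integral_const_mul,
    integral_sub i1 (is.const_mul 2), integral_const_mul, integral_add ip iq, hp1, hq1] at hint
  have h5 : V * (2 * V) ≤ V * (V⁻¹ * (1 + 1 - 2 * ∫ z, √(p z * q z)) + V / 2 * (1 + 1)) :=
    mul_le_mul_of_nonneg_left hint hV.le
  rw [mul_add, mul_inv_cancel_left₀ hV.ne'] at h5
  nlinarith

theorem exp_div_sub_one_le {a : ℝ} (ha : 0 ≤ a) {n : ℕ} (hn : 1 ≤ n) :
    Real.exp (a / n) - 1 ≤ (1 / n) * Real.exp (2 * a) := by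
  have hn1 : (1 : ℝ) ≤ n := by exact_mod_cast hn
  have h1 : Real.exp (a / n) - 1 ≤ a / n * Real.exp (a / n) := by
    have h := Real.add_one_le_exp (-(a / n))
    have h2 := mul_le_mul_of_nonneg_right h (Real.exp_pos (a / n)).le
    rw [← Real.exp_add, neg_add_cancel, Real.exp_zero] at h2
    linarith
  have h2 : Real.exp (a / n) ≤ Real.exp a := Real.exp_le_exp.2 (div_le_self ha hn1)
  have h3 : a ≤ Real.exp a := by linarith [Real.add_one_le_exp a]
  calc Real.exp (a / n) - 1 ≤ a / n * Real.exp (a / n) := h1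
    _ ≤ Real.exp a / n * Real.exp a := by gcongr
    _ = (1 / n) * Real.exp (2 * a) := by rw [two_mul, Real.exp_add]; ring

theorem integrable_and_integral_exp_mul_sqrt_le {K c : ℝ} (hc : 0 < c)
    (hp : ∀ z, 0 ≤ p z) (hq : ∀ z, 0 ≤ q z) (ip : Integrable p) (iq : Integrable q)
    (hpK : ∀ z, p z ≤ K * Real.exp (-c * ‖z‖ ^ 2)) (hqK : ∀ z, q z ≤ K * Real.exp (-c * ‖z‖ ^ 2))
    {n : ℕ} (hn : 1 ≤ n) :
    Integrable (fun z => Real.exp (c / 4 * (1 + ‖z‖ ^ 2) / n) * √(p z * q z)) ∧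
    ∫ z, Real.exp (c / 4 * (1 + ‖z‖ ^ 2) / n) * √(p z * q z) ≤ (∫ z, √(p z * q z)) +
      (K * Real.exp (c / 2) * ∫ z : (Fin d → ℝ) × ℝ, Real.exp (-(c / 2) * ‖z‖ ^ 2)) / n := by
  have is := integrable_sqrt_mul hp hq ip iq
  have ie := integrable_exp_neg_mul_norm_sq (d := d) (half_pos hc)
  have hsq : ∀ z, √(p z * q z) ≤ K * Real.exp (-c * ‖z‖ ^ 2) := fun z =>
    Real.sqrt_le_iff.2 ⟨(hp z).trans (hpK z), by
      rw [sq]; exact mul_le_mul (hpK z) (hqK z) (hq z) ((hp z).trans (hpK z))⟩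
  have hpt : ∀ z, Real.exp (c / 4 * (1 + ‖z‖ ^ 2) / n) * √(p z * q z) ≤ √(p z * q z) +
      (K * Real.exp (c / 2) / n) * Real.exp (-(c / 2) * ‖z‖ ^ 2) := fun z => by
    have h1 := exp_div_sub_one_le (show 0 ≤ c / 4 * (1 + ‖z‖ ^ 2) by positivity) hn
    have h2 := mul_le_mul h1 (hsq z) (Real.sqrt_nonneg _) (by positivity)
    have h3 : Real.exp (2 * (c / 4 * (1 + ‖z‖ ^ 2))) * Real.exp (-c * ‖z‖ ^ 2) =
        Real.exp (c / 2) * Real.exp (-(c / 2) * ‖z‖ ^ 2) := by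
      rw [← Real.exp_add, ← Real.exp_add]; congr 1; ring
    have h4 : 1 / (n : ℝ) * Real.exp (2 * (c / 4 * (1 + ‖z‖ ^ 2))) *
        (K * Real.exp (-c * ‖z‖ ^ 2)) =
        (K * Real.exp (c / 2) / n) * Real.exp (-(c / 2) * ‖z‖ ^ 2) := by
      linear_combination (K / n) * h3
    rw [h4] at h2
    linarith
  have ib := is.add (ie.const_mul (K * Real.exp (c / 2) / n))
  have i1 : Integrable (fun z => Real.exp (c / 4 * (1 + ‖z‖ ^ 2) / n) * √(p z * q z)) := by
    refine Integrable.mono' ib (AEStronglyMeasurable.mul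
      (Continuous.aestronglyMeasurable (by fun_prop)) is.aestronglyMeasurable)
      (ae_of_all _ fun z => ?_)
    rw [Real.norm_eq_abs, abs_of_nonneg (by positivity)]
    exact hpt z
  refine ⟨i1, (integral_mono i1 ib hpt).trans_eq ?_⟩
  simp only [Pi.add_apply]
  rw [integral_add is (ie.const_mul _), integral_const_mul]
  ring

end Affinity

/-- Markov's inequality for a product of independent nonnegative variables. -/
theorem pi_measure_one_le_prod_le {Z : Type*} [MeasurableSpace Z] (μ : Measure Z)
    [IsProbabilityMeasure μ] (n : ℕ) {g : Z → ENNReal} (hg : Measurable g) :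
    (Measure.pi fun _ : Fin n => μ) {s | 1 ≤ ∏ i, g (s i)} ≤ (∫⁻ z, g z ∂μ) ^ n := by
  have hind := ProbabilityTheory.iIndepFun_pi (μ := fun _ : Fin n => μ) (X := fun _ => g)
    fun _ => hg.aemeasurable
  have hm : ∀ i : Fin n, Measurable fun s : Fin n → Z => g (s i) :=
    fun i => hg.comp (measurable_pi_apply i)
  have hprod := ProbabilityTheory.lintegral_prod_eq_prod_lintegral_of_indepFun Finset.univ _ hind hm
  have hmarkov := mul_meas_ge_le_lintegral (μ := Measure.pi fun _ : Fin n => μ)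
    (Finset.measurable_prod Finset.univ fun i _ => hm i) 1
  rw [one_mul] at hmarkov
  refine hmarkov.trans ?_
  rw [hprod]
  simp only [fun i => (measurePreserving_eval (fun _ : Fin n => μ) i).lintegral_comp hg]
  simp

section Likelihood

variable {d k : ℕ} {β : ℝ} {Θ : Set (Param d)} {G₀ : Mix d}

theorem Mix.mem.mono {k₀ : ℕ} (h : G₀.mem k₀ β Θ) (hk : k₀ ≤ k) : G₀.mem k β Θ :=
  ⟨h.1, h.2.1.trans hk, h.2.2⟩

/-- The law with density `p_G`. -/
noncomputable def Mix.law (G : Mix d) : Measure ((Fin d → ℝ) × ℝ) :=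
  volume.withDensity fun z => ENNReal.ofReal (G.pdf z)

theorem Mix.mem.isProbabilityMeasure_law (hG : G₀.mem k β Θ) (hΘ : GaussianParams Θ)
    (hβ : 0 < β) : IsProbabilityMeasure G₀.law := by
  refine ⟨?_⟩
  rw [Mix.law, withDensity_apply _ MeasurableSet.univ, Measure.restrict_univ,
    ← ofReal_integral_eq_lintegral_ofReal (hG.integrable_pdf hΘ)
      (ae_of_all _ fun z => (hG.pdf_pos hΘ hβ z).le), hG.integral_pdf hΘ, ENNReal.ofReal_one]

/-- The probability that a fixed density, inflated by a subgaussian factor, has a larger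
likelihood than the true one. -/
theorem law_pi_inflated_likelihood_le (hΘ : GaussianParams Θ) (hβ : 0 < β) {K c : ℝ} (hc : 0 < c)
    (hK : ∀ θ ∈ Θ, ∀ z : (Fin d → ℝ) × ℝ, Fcomp θ z.1 z.2 ≤ K * Real.exp (-c * ‖z‖ ^ 2))
    (hG₀ : G₀.mem k β Θ) {G : Mix d} (hG : G.mem k β Θ) (hV : 0 < TV G.pdf G₀.pdf)
    {n : ℕ} (hn : 1 ≤ n) :
    (Measure.pi fun _ : Fin n => G₀.law)
      {s | ∑ i, Real.log (G₀.pdf (s i)) ≤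
        ∑ i, (c / 2 / n * (1 + ‖s i‖ ^ 2) + Real.log (G.pdf (s i)))} ≤
      ENNReal.ofReal (Real.exp (-(n * TV G.pdf G₀.pdf ^ 2 / 2) +
        K * Real.exp (c / 2) * ∫ z : (Fin d → ℝ) × ℝ, Real.exp (-(c / 2) * ‖z‖ ^ 2))) := by
  have hn0 : (0 : ℝ) < n := by exact_mod_cast hn
  set M := K * Real.exp (c / 2) * ∫ z : (Fin d → ℝ) × ℝ, Real.exp (-(c / 2) * ‖z‖ ^ 2)
  set V := TV G.pdf G₀.pdf with hVdef
  have := hG₀.isProbabilityMeasure_law hΘ hβ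
  have pp := hG.pdf_pos hΘ hβ
  have pq := hG₀.pdf_pos hΘ hβ
  let h : (Fin d → ℝ) × ℝ → ℝ := fun z =>
    (c / 2 / n * (1 + ‖z‖ ^ 2) + Real.log (G.pdf z) - Real.log (G₀.pdf z)) / 2
  have hh : Measurable h := by
    have h1 := G.continuous_pdf.log fun z => (pp z).ne'
    have h2 := G₀.continuous_pdf.log fun z => (pq z).ne'
    exact Continuous.measurable (by fun_prop)
  have hqg : ∀ z, G₀.pdf z * Real.exp (h z) =
      Real.exp (c / 4 * (1 + ‖z‖ ^ 2) / n) * √(G.pdf z * G₀.pdf z) := fun z => by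
    have e1 := Real.exp_log (pq z)
    have e2 : √(G.pdf z * G₀.pdf z) =
        Real.exp ((Real.log (G.pdf z) + Real.log (G₀.pdf z)) / 2) := by
      rw [Real.exp_half, Real.exp_add, Real.exp_log (pp z), e1]
    rw [e2]
    nth_rewrite 1 [← e1]
    rw [← Real.exp_add, ← Real.exp_add]
    congr 1
    simp only [h]
    ring
  obtain ⟨i1, hle⟩ := integrable_and_integral_exp_mul_sqrt_le hc (fun z => (pp z).le)
    (fun z => (pq z).le) (hG.integrable_pdf hΘ) (hG₀.integrable_pdf hΘ) (hG.pdf_le hβ hK)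
    (hG₀.pdf_le hβ hK) hn
  have haff := integral_sqrt_mul_le (fun z => (pp z).le) (fun z => (pq z).le)
    (hG.integrable_pdf hΘ) (hG₀.integrable_pdf hΘ) (hG.integral_pdf hΘ) (hG₀.integral_pdf hΘ) hV
  have hlint : ∫⁻ z, ENNReal.ofReal (Real.exp (h z)) ∂G₀.law ≤
      ENNReal.ofReal (Real.exp (-(V ^ 2 / 2) + M / n)) := by
    rw [Mix.law, lintegral_withDensity_eq_lintegral_mul _
      G₀.continuous_pdf.measurable.ennreal_ofReal hh.exp.ennreal_ofReal]
    have : ∀ z, ((fun z => ENNReal.ofReal (G₀.pdf z)) * fun z => ENNReal.ofReal (Real.exp (h z))) z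
        = ENNReal.ofReal (Real.exp (c / 4 * (1 + ‖z‖ ^ 2) / n) * √(G.pdf z * G₀.pdf z)) := by
      intro z
      rw [Pi.mul_apply, ← ENNReal.ofReal_mul (pq z).le, hqg]
    rw [lintegral_congr this, ← ofReal_integral_eq_lintegral_ofReal i1
      (ae_of_all _ fun z => by positivity)]
    refine ENNReal.ofReal_le_ofReal ?_
    linarith [Real.add_one_le_exp (-(V ^ 2 / 2) + M / n)]
  calc _ ≤ (Measure.pi fun _ : Fin n => G₀.law)
        {s | 1 ≤ ∏ i, ENNReal.ofReal (Real.exp (h (s i)))} := by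
        refine measure_mono fun s hs => ?_
        rw [Set.mem_ofPred_eq] at hs ⊢
        rw [← ENNReal.ofReal_prod_of_nonneg fun i _ => (Real.exp_pos _).le, ← Real.exp_sum,
          ENNReal.one_le_ofReal, Real.one_le_exp_iff, ← Finset.sum_div, Finset.sum_sub_distrib]
        linarith
    _ ≤ _ := pi_measure_one_le_prod_le _ _ hh.exp.ennreal_ofReal
    _ ≤ _ := pow_le_pow_left' hlint n
    _ = _ := by
        rw [← ENNReal.ofReal_pow (Real.exp_pos _).le, ← Real.exp_nat_mul]
        congr 2
        field_simp

end Likelihood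

/-- **Joint density estimation rate for the MLE.** Under the true density `p_{G0}`,
any maximum likelihood estimator over `O_{k,β}(Θ)` converges to `p_{G0}` in total
variation at the parametric rate `√(log n / n)`, up to universal constants:
the outer probability that `V(p_{Ĝ_n}, p_{G0}) > C₁ √(log n / n)` is at most
`C₃ n^{−C₂}`. -/
theorem mle_density_estimation_rate (d k0 k : ℕ) (hd : 0 < d) (hk0 : 0 < k0)
    (hk : k0 ≤ k) (Θ : Set (Param d)) (hΘc : IsCompact Θ)
    (hΘ : ∀ θ ∈ Θ, (θ.2.1).IsSymm ∧ (θ.2.1).PosDef ∧ 0 < θ.2.2.2.2)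
    (β : ℝ) (hβ : 0 < β) (hβk : β ≤ 1 / (k : ℝ))
    (G0 : Mix d) (hG0 : G0.mem k0 β Θ) :
    ∃ C₁ C₂ C₃ : ℝ, 0 < C₁ ∧ 0 < C₂ ∧ 0 < C₃ ∧
      ∀ n : ℕ, 2 ≤ n →
      ∀ Ghat : (Fin n → (Fin d → ℝ) × ℝ) → Mix d,
        (∀ s, (Ghat s).mem k β Θ) →
        (∀ s, ∀ G : Mix d, G.mem k β Θ →
          ∑ i, Real.log (G.pdf (s i)) ≤ ∑ i, Real.log ((Ghat s).pdf (s i))) →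
        (Measure.pi fun _ : Fin n =>
            (volume : Measure ((Fin d → ℝ) × ℝ)).withDensity
              (fun z => ENNReal.ofReal (G0.pdf z)))
          {s | C₁ * Real.sqrt (Real.log n / n) < TV ((Ghat s).pdf) (G0.pdf)}
          ≤ ENNReal.ofReal (C₃ * (n : ℝ) ^ (-C₂)) := by
  have hΘ' : GaussianParams Θ := fun θ hθ => (hΘ θ hθ).2
  obtain ⟨K, -, c, hc, hK⟩ := exists_Fcomp_le_exp hΘc hΘ'
  obtain ⟨C, hC, A, hcode⟩ := exists_code hΘc hΘ' k hβ (half_pos hc)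
  set M := K * Real.exp (c / 2) * ∫ z : (Fin d → ℝ) × ℝ, Real.exp (-(c / 2) * ‖z‖ ^ 2) with hM
  refine ⟨√(2 * (A + 1)), 1, C * Real.exp M, by positivity, one_pos, by positivity, ?_⟩
  intro n hn Ghat hmem hmax
  have hn1 : 1 ≤ n := by omega
  have hn0 : (0 : ℝ) < n := by exact_mod_cast hn1
  have hlog : 0 ≤ Real.log n := Real.log_nonneg (by exact_mod_cast hn1)
  have hG0k := hG0.mono hk
  obtain ⟨κ, _, code, hcard, hcell⟩ := hcode n hn1
  change (Measure.pi fun _ : Fin n => G0.law) _ ≤ _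
  set bad : Set (Fin n → (Fin d → ℝ) × ℝ) :=
    {s | √(2 * (A + 1)) * Real.sqrt (Real.log n / n) < TV ((Ghat s).pdf) (G0.pdf)} with hbad
  have hpiece : ∀ j : κ, (Measure.pi fun _ : Fin n => G0.law)
      (bad ∩ {s | code (Ghat s) = j}) ≤
        ENNReal.ofReal (Real.exp (-((A + 1) * Real.log n) + M)) := by
    intro j
    rcases (bad ∩ {s | code (Ghat s) = j}).eq_empty_or_nonempty with h | ⟨s₀, hs₀, hj⟩
    · rw [h, measure_empty]; exact zero_le
    rw [hbad, Set.mem_ofPred_eq] at hs₀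
    have hV : 0 < TV (Ghat s₀).pdf G0.pdf := lt_of_le_of_lt (by positivity) hs₀
    have hV2 : (A + 1) * Real.log n ≤ n * TV (Ghat s₀).pdf G0.pdf ^ 2 / 2 := by
      have h1 := pow_le_pow_left₀ (by positivity) hs₀.le 2
      rw [mul_pow, Real.sq_sqrt (by positivity), Real.sq_sqrt (by positivity)] at h1
      have h2 := mul_le_mul_of_nonneg_left h1 hn0.le
      have h3 : (n : ℝ) * (2 * (A + 1) * (Real.log n / n)) = 2 * ((A + 1) * Real.log n) := by
        field_simp
      linarith
    refine (measure_mono fun s hs => ?_).trans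
      ((law_pi_inflated_likelihood_le hΘ' hβ hc hK hG0k (hmem s₀) hV hn1).trans
        (ENNReal.ofReal_le_ofReal (Real.exp_le_exp.2 (by linarith))))
    refine (hmax s G0 hG0k).trans (Finset.sum_le_sum fun i _ => ?_)
    have h1 := hcell (Ghat s) (Ghat s₀) (hmem s) (hmem s₀) (hs.2.trans hj.symm) (s i)
    have h2 := (hmem s).pdf_pos hΘ' hβ (s i)
    have h3 := (hmem s₀).pdf_pos hΘ' hβ (s i)
    have h4 := Real.log_le_log h2 h1
    rwa [Real.log_mul (Real.exp_pos _).ne' h3.ne', Real.log_exp] at h4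
  have hcover : bad ⊆ ⋃ j : κ, bad ∩ {s | code (Ghat s) = j} := fun s hs =>
    Set.mem_iUnion.2 ⟨code (Ghat s), hs, rfl⟩
  calc (Measure.pi fun _ : Fin n => G0.law) bad
      ≤ ∑ j : κ, (Measure.pi fun _ : Fin n => G0.law) (bad ∩ {s | code (Ghat s) = j}) :=
        (measure_mono hcover).trans (measure_iUnion_fintype_le _ _)
    _ ≤ ∑ _j : κ, ENNReal.ofReal (Real.exp (-((A + 1) * Real.log n) + M)) :=
        Finset.sum_le_sum fun j _ => hpiece j
    _ = ENNReal.ofReal (Fintype.card κ * Real.exp (-((A + 1) * Real.log n) + M)) := by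
        rw [Finset.sum_const, Finset.card_univ, nsmul_eq_mul, ENNReal.ofReal_mul (by positivity),
          ENNReal.ofReal_natCast]
    _ ≤ ENNReal.ofReal (C * Real.exp M * (n : ℝ) ^ (-(1 : ℝ))) := by
        refine ENNReal.ofReal_le_ofReal ?_
        have h1 : Real.exp (-((A + 1) * Real.log n) + M) =
            ((n : ℝ) ^ A)⁻¹ * (n : ℝ)⁻¹ * Real.exp M := by
          rw [Real.exp_add, show -((A + 1) * Real.log n) = -(A * Real.log n) + -Real.log n by ring,
            Real.exp_add, Real.exp_neg, Real.exp_neg, Real.exp_nat_mul, Real.exp_log hn0]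
        rw [h1, Real.rpow_neg_one]
        calc (Fintype.card κ : ℝ) * (((n : ℝ) ^ A)⁻¹ * (n : ℝ)⁻¹ * Real.exp M)
            ≤ (C * (n : ℝ) ^ A) * (((n : ℝ) ^ A)⁻¹ * (n : ℝ)⁻¹ * Real.exp M) := by gcongr
          _ = C * Real.exp M * (n : ℝ)⁻¹ := by field_simp
end

section
/- r̄(3) = 6; that is, the bar-system of order (3, 6) admits no non-trivial solution, while the bar-system of order (3, 5) does admit a non-trivial solution. -/
/-- The `s`-th equation of the bar-system:
`Σ_{l=1}^m Σ_{n₁+2n₂=s} p_l² q_{1,l}^{n₁} q_{2,l}^{n₂} / (n₁!·n₂!)`. -/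
noncomputable def barEq (m : ℕ) (p q1 q2 : Fin m → ℝ) (s : ℕ) : ℝ :=
  ∑ l : Fin m,
    ∑ nn ∈ (Finset.range (s + 1) ×ˢ Finset.range (s + 1)).filter
        (fun nn => nn.1 + 2 * nn.2 = s),
      p l ^ 2 * q1 l ^ nn.1 * q2 l ^ nn.2 /
        ((nn.1.factorial : ℝ) * (nn.2.factorial : ℝ))

/-- The bar-system of order `(m, r)` admits a non-trivial solution: there are reals
`p_l, q_{1,l}, q_{2,l}` with all `p_l ≠ 0` and some `q_{1,l} ≠ 0` satisfying the
equations for every `s = 1, …, r`. -/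
def barSol (m r : ℕ) : Prop :=
  ∃ p q1 q2 : Fin m → ℝ,
    (∀ l, p l ≠ 0) ∧ (∃ l, q1 l ≠ 0) ∧
    ∀ s : ℕ, 1 ≤ s → s ≤ r → barEq m p q1 q2 s = 0

/-- `r̄(m)`: the smallest positive integer `r` such that the bar-system of order
`(m, r)` admits no non-trivial solution. -/
noncomputable def rbar (m : ℕ) : ℕ := sInf {r : ℕ | 1 ≤ r ∧ ¬ barSol m r}

open MeasureTheory ProbabilityTheory
open scoped NNReal

/-- The moments `m₀, m₁, …` of the normal law `N(x, v)`, as polynomials in `x` and `v`; the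
variance `v` may be negative. -/
def gaussMoment (x v : ℝ) : ℕ → ℝ
  | 0 => 1
  | 1 => x
  | n + 2 => x * gaussMoment x v (n + 1) + (n + 1) * v * gaussMoment x v n

/-- The value at `(t₀ + t₁ z + t₂ z²) z² (α z + β)²` of the linear functional `zᵏ ↦ m k`. -/
def testMoment (m : ℕ → ℝ) (t₀ t₁ t₂ α β : ℝ) : ℝ :=
  t₀ * β ^ 2 * m 2 + (t₁ * β ^ 2 + 2 * t₀ * α * β) * m 3 +
    (t₂ * β ^ 2 + 2 * t₁ * α * β + t₀ * α ^ 2) * m 4 +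
    (2 * t₂ * α * β + t₁ * α ^ 2) * m 5 + t₂ * α ^ 2 * m 6

lemma gaussMoment_zero_var (x : ℝ) : ∀ n, gaussMoment x 0 n = x ^ n
  | 0 => by simp [gaussMoment]
  | 1 => by simp [gaussMoment]
  | n + 2 => by
    rw [gaussMoment, gaussMoment_zero_var x (n + 1)]
    ring

lemma integrable_gaussianPDFReal_mul_pow (x : ℝ) {v : ℝ≥0} (hv : v ≠ 0) (n : ℕ) :
    Integrable (fun z => gaussianPDFReal x v z * z ^ n) := by
  have h : Integrable (fun z : ℝ => z ^ n) (gaussianReal x v) := by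
    have h1 := (memLp_id_gaussianReal (μ := x) (v := v) (n : ℝ≥0)).integrable_norm_pow'
    refine (integrable_norm_iff (by fun_prop)).1 ?_
    simpa using h1
  rw [gaussianReal_of_var_ne_zero x hv,
    integrable_withDensity_iff (measurable_gaussianPDF x v)
      (Filter.Eventually.of_forall fun _ => gaussianPDF_lt_top)] at h
  simpa [toReal_gaussianPDF, mul_comm] using h

lemma hasDerivAt_gaussianPDFReal (x : ℝ) {v : ℝ≥0} (hv : v ≠ 0) (z : ℝ) :
    HasDerivAt (gaussianPDFReal x v) (-((z - x) / v) * gaussianPDFReal x v z) z := by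
  have hv' : (v : ℝ) ≠ 0 := by exact_mod_cast hv
  have h1 : HasDerivAt (fun z : ℝ => -(z - x) ^ 2 / (2 * v)) (-((z - x) / v)) z := by
    have := ((((hasDerivAt_id z).sub_const x).pow 2).neg).div_const (2 * (v : ℝ))
    refine this.congr_deriv ?_
    simp
    field_simp
  rw [gaussianPDFReal_def]
  refine (h1.exp.const_mul _).congr_deriv ?_
  ring

lemma integral_gaussianPDFReal_mul_pow (x : ℝ) {v : ℝ≥0} (hv : v ≠ 0) :
    ∀ n, ∫ z, gaussianPDFReal x v z * z ^ n = gaussMoment x v n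
  | 0 => by simpa [gaussMoment] using integral_gaussianPDFReal_eq_one x hv
  | 1 => by
    have h := integral_id_gaussianReal (μ := x) (v := v)
    rw [integral_gaussianReal_eq_integral_smul hv] at h
    simpa [gaussMoment] using h
  | n + 2 => by
    have hv' : (v : ℝ) ≠ 0 := by exact_mod_cast hv
    have hi := integrable_gaussianPDFReal_mul_pow x hv
    have hd : ∀ z, HasDerivAt (fun z => gaussianPDFReal x v z * z ^ (n + 1))
        ((n + 1) * (gaussianPDFReal x v z * z ^ n)
          + x / v * (gaussianPDFReal x v z * z ^ (n + 1))
          - 1 / v * (gaussianPDFReal x v z * z ^ (n + 2))) z := by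
      intro z
      refine ((hasDerivAt_gaussianPDFReal x hv z).mul (hasDerivAt_pow (n + 1) z)).congr_deriv ?_
      push_cast
      field_simp
      ring
    have h0 := integral_eq_zero_of_hasDerivAt_of_integrable hd
      ((((hi n).const_mul _).fun_add ((hi (n + 1)).const_mul _)).sub ((hi (n + 2)).const_mul _))
      (hi (n + 1))
    rw [integral_sub (((hi n).const_mul _).fun_add ((hi (n + 1)).const_mul _))
        ((hi (n + 2)).const_mul _),
      integral_add ((hi n).const_mul _) ((hi (n + 1)).const_mul _),
      integral_const_mul, integral_const_mul, integral_const_mul,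
      integral_gaussianPDFReal_mul_pow x hv n,
      integral_gaussianPDFReal_mul_pow x hv (n + 1)] at h0
    rw [gaussMoment]
    field_simp at h0
    linarith

lemma gaussianPDFReal_mul_test (x : ℝ) (v : ℝ≥0) (t₀ t₁ t₂ α β : ℝ) :
    (fun z => gaussianPDFReal x v z * ((t₀ + t₁ * z + t₂ * z ^ 2) * (z * (α * z + β)) ^ 2)) =
      fun z => t₀ * β ^ 2 * (gaussianPDFReal x v z * z ^ 2)
        + (t₁ * β ^ 2 + 2 * t₀ * α * β) * (gaussianPDFReal x v z * z ^ 3)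
        + (t₂ * β ^ 2 + 2 * t₁ * α * β + t₀ * α ^ 2) * (gaussianPDFReal x v z * z ^ 4)
        + (2 * t₂ * α * β + t₁ * α ^ 2) * (gaussianPDFReal x v z * z ^ 5)
        + t₂ * α ^ 2 * (gaussianPDFReal x v z * z ^ 6) := by
  funext z
  ring

lemma integrable_gaussianPDFReal_mul_test (x : ℝ) {v : ℝ≥0} (hv : v ≠ 0) (t₀ t₁ t₂ α β : ℝ) :
    Integrable fun z =>
      gaussianPDFReal x v z * ((t₀ + t₁ * z + t₂ * z ^ 2) * (z * (α * z + β)) ^ 2) := by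
  have hi := integrable_gaussianPDFReal_mul_pow x hv
  rw [gaussianPDFReal_mul_test]
  exact (((((hi 2).const_mul _).add ((hi 3).const_mul _)).add ((hi 4).const_mul _)).add
    ((hi 5).const_mul _)).add ((hi 6).const_mul _)

lemma integral_gaussianPDFReal_mul_test (x : ℝ) {v : ℝ≥0} (hv : v ≠ 0) (t₀ t₁ t₂ α β : ℝ) :
    ∫ z, gaussianPDFReal x v z * ((t₀ + t₁ * z + t₂ * z ^ 2) * (z * (α * z + β)) ^ 2) =
      testMoment (gaussMoment x v) t₀ t₁ t₂ α β := by
  have hi := integrable_gaussianPDFReal_mul_pow x hv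
  have hm := integral_gaussianPDFReal_mul_pow x hv
  have h2 := (hi 2).const_mul (t₀ * β ^ 2)
  have h3 := h2.fun_add ((hi 3).const_mul (t₁ * β ^ 2 + 2 * t₀ * α * β))
  have h4 := h3.fun_add ((hi 4).const_mul (t₂ * β ^ 2 + 2 * t₁ * α * β + t₀ * α ^ 2))
  have h5 := h4.fun_add ((hi 5).const_mul (2 * t₂ * α * β + t₁ * α ^ 2))
  rw [gaussianPDFReal_mul_test, integral_add h5 ((hi 6).const_mul _),
    integral_add h4 ((hi 5).const_mul _), integral_add h3 ((hi 4).const_mul _),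
    integral_add h2 ((hi 3).const_mul _)]
  simp only [integral_const_mul, hm, testMoment]

lemma exists_quadratic_mul_test_ne_zero {t₀ t₁ t₂ α β : ℝ}
    (ht : ¬ (t₀ = 0 ∧ t₁ = 0 ∧ t₂ = 0)) (hαβ : ¬ (α = 0 ∧ β = 0)) :
    ∃ z : ℝ, (t₀ + t₁ * z + t₂ * z ^ 2) * (z * (α * z + β)) ≠ 0 := by
  open Polynomial in
  by_contra! h
  have hP : (C t₀ + C t₁ * X + C t₂ * X ^ 2) * (X * (C α * X + C β)) = (0 : ℝ[X]) := by
    refine Polynomial.funext fun z => ?_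
    simpa using h z
  rcases mul_eq_zero.1 hP with h1 | h1
  · refine ht ⟨?_, ?_, ?_⟩
    · simpa using congrArg (coeff · 0) h1
    · simpa [coeff_X, coeff_C] using congrArg (coeff · 1) h1
    · simpa [coeff_X, coeff_C] using congrArg (coeff · 2) h1
  · rcases mul_eq_zero.1 h1 with h2 | h2
    · exact X_ne_zero h2
    · refine hαβ ⟨?_, ?_⟩
      · simpa [coeff_X, coeff_C] using congrArg (coeff · 1) h2
      · simpa [coeff_X, coeff_C] using congrArg (coeff · 0) h2

/-- If the signed density `g = c pdf + d pdf'` satisfies `g T ≥ 0` with equality only at zeros of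
the nonzero quadratic `q`, then the associated functional is positive on `T z² (α z + β)²`. -/
lemma testMoment_combination_pos {x y : ℝ} {v w : ℝ≥0} (hv : v ≠ 0) (hw : w ≠ 0)
    {c d t₀ t₁ t₂ q₀ q₁ q₂ α β : ℝ}
    (hnonneg : ∀ z, 0 ≤ (c * gaussianPDFReal x v z + d * gaussianPDFReal y w z) *
      (t₀ + t₁ * z + t₂ * z ^ 2))
    (hzero : ∀ z, (c * gaussianPDFReal x v z + d * gaussianPDFReal y w z) *
      (t₀ + t₁ * z + t₂ * z ^ 2) = 0 → q₀ + q₁ * z + q₂ * z ^ 2 = 0)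
    (hq : ¬ (q₀ = 0 ∧ q₁ = 0 ∧ q₂ = 0)) (hαβ : ¬ (α = 0 ∧ β = 0)) :
    0 < c * testMoment (gaussMoment x v) t₀ t₁ t₂ α β +
      d * testMoment (gaussMoment y w) t₀ t₁ t₂ α β := by
  set F : ℝ → ℝ := fun z => (c * gaussianPDFReal x v z + d * gaussianPDFReal y w z) *
    (t₀ + t₁ * z + t₂ * z ^ 2) * (z * (α * z + β)) ^ 2 with hF
  have hx := (integrable_gaussianPDFReal_mul_test x hv t₀ t₁ t₂ α β).const_mul c
  have hy := (integrable_gaussianPDFReal_mul_test y hw t₀ t₁ t₂ α β).const_mul d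
  have hFeq : F = fun z =>
      c * (gaussianPDFReal x v z * ((t₀ + t₁ * z + t₂ * z ^ 2) * (z * (α * z + β)) ^ 2)) +
      d * (gaussianPDFReal y w z * ((t₀ + t₁ * z + t₂ * z ^ 2) * (z * (α * z + β)) ^ 2)) := by
    funext z
    rw [hF]
    ring
  have hint : Integrable F := by
    rw [hFeq]
    exact hx.add hy
  have hval : ∫ z, F z = c * testMoment (gaussMoment x v) t₀ t₁ t₂ α β +
      d * testMoment (gaussMoment y w) t₀ t₁ t₂ α β := by
    rw [hFeq, integral_add hx hy, integral_const_mul, integral_const_mul,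
      integral_gaussianPDFReal_mul_test x hv, integral_gaussianPDFReal_mul_test y hw]
  have hF0 : 0 ≤ F := fun z => mul_nonneg (hnonneg z) (sq_nonneg _)
  rw [← hval]
  refine lt_of_le_of_ne (integral_nonneg hF0) fun h => ?_
  have hcont : Continuous F := by
    have hcx : Continuous (gaussianPDFReal x v) :=
      continuous_iff_continuousAt.2 fun z => (hasDerivAt_gaussianPDFReal x hv z).continuousAt
    have hcy : Continuous (gaussianPDFReal y w) :=
      continuous_iff_continuousAt.2 fun z => (hasDerivAt_gaussianPDFReal y hw z).continuousAt
    rw [hF]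
    fun_prop
  have hae := (integral_eq_zero_iff_of_nonneg hF0 hint).1 h.symm
  have hall : F = 0 := (hcont.ae_eq_iff_eq volume continuous_zero).1 hae
  obtain ⟨z, hz⟩ := exists_quadratic_mul_test_ne_zero hq hαβ
  have hFz : F z = 0 := congrFun hall z
  rcases mul_eq_zero.1 hFz with h1 | h1
  · exact hz (by rw [hzero z h1, zero_mul])
  · exact hz (by rw [pow_eq_zero_iff two_ne_zero |>.1 h1, mul_zero])

lemma gaussianPDFReal_eq_exp_quadratic_mul (x y : ℝ) {v w : ℝ≥0} (hv : v ≠ 0) (hw : w ≠ 0)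
    {c d : ℝ} (hc : 0 < c) (hd : 0 < d) :
    ∃ q₀ q₁ q₂ : ℝ, (∀ z, c * gaussianPDFReal x v z =
        Real.exp (q₀ + q₁ * z + q₂ * z ^ 2) * (d * gaussianPDFReal y w z)) ∧
      (q₀ = 0 ∧ q₁ = 0 ∧ q₂ = 0 → x = y ∧ v = w ∧ c = d) := by
  have hv0 : (0 : ℝ) < v := by exact_mod_cast pos_iff_ne_zero.2 hv
  have hw0 : (0 : ℝ) < w := by exact_mod_cast pos_iff_ne_zero.2 hw
  set e := Real.log (c * (√(2 * Real.pi * v))⁻¹) with he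
  set f := Real.log (d * (√(2 * Real.pi * w))⁻¹) with hf
  have hce : c * (√(2 * Real.pi * v))⁻¹ = Real.exp e := (Real.exp_log (by positivity)).symm
  have hdf : d * (√(2 * Real.pi * w))⁻¹ = Real.exp f := (Real.exp_log (by positivity)).symm
  have key : ∀ z, c * gaussianPDFReal x v z =
      Real.exp (e - f - x ^ 2 / (2 * v) + y ^ 2 / (2 * w) + (x / v - y / w) * z +
        (1 / (2 * w) - 1 / (2 * v)) * z ^ 2) * (d * gaussianPDFReal y w z) := by
    intro z
    rw [gaussianPDFReal, gaussianPDFReal, ← mul_assoc, ← mul_assoc d, hce, hdf, ← Real.exp_add,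
      ← Real.exp_add, ← Real.exp_add]
    congr 1
    field_simp
    ring
  refine ⟨_, _, _, key, ?_⟩
  rintro ⟨h0, h1, h2⟩
  have hvw : (v : ℝ) = w := by
    field_simp at h2
    linarith
  have hxy : x = y := by
    rw [hvw] at h1
    field_simp at h1
    linarith
  have hvw' : v = w := by exact_mod_cast hvw
  refine ⟨hxy, hvw', ?_⟩
  have h := key 0
  rw [h0, h1, h2, hxy, hvw'] at h
  simp only [zero_mul, add_zero, Real.exp_zero, one_mul] at h
  exact mul_right_cancel₀ (gaussianPDFReal_pos y w 0 hw).ne' h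

/-- For two Gaussians with weights of opposite sign there is a quadratic with real roots (or a
constant) having the sign of the signed density. -/
lemma exists_test_of_opposite_sign (x y : ℝ) {v w : ℝ≥0} (hv : v ≠ 0) (hw : w ≠ 0)
    {c d : ℝ} (hc : 0 < c) (hd : 0 < d) (hne : ¬ (x = y ∧ v = w ∧ c = d)) :
    ∃ t₀ t₁ t₂ : ℝ, 0 ≤ t₁ ^ 2 - 4 * t₀ * t₂ ∧ ∀ α β : ℝ, ¬ (α = 0 ∧ β = 0) →
      0 < c * testMoment (gaussMoment x v) t₀ t₁ t₂ α β +
        -d * testMoment (gaussMoment y w) t₀ t₁ t₂ α β := by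
  obtain ⟨q₀, q₁, q₂, hq, hq0⟩ := gaussianPDFReal_eq_exp_quadratic_mul x y hv hw hc hd
  have hqne : ¬ (q₀ = 0 ∧ q₁ = 0 ∧ q₂ = 0) := fun h => hne (hq0 h)
  have hg : ∀ z, c * gaussianPDFReal x v z + -d * gaussianPDFReal y w z =
      d * gaussianPDFReal y w z * (Real.exp (q₀ + q₁ * z + q₂ * z ^ 2) - 1) := fun z => by
    rw [hq]
    ring
  have hpos : ∀ z, 0 < d * gaussianPDFReal y w z := fun z =>
    mul_pos hd (gaussianPDFReal_pos y w z hw)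
  have hmain : ∀ t₀ t₁ t₂ : ℝ, (∀ z, q₀ + q₁ * z + q₂ * z ^ 2 ≠ 0 →
        0 < (Real.exp (q₀ + q₁ * z + q₂ * z ^ 2) - 1) * (t₀ + t₁ * z + t₂ * z ^ 2)) →
      ∀ α β : ℝ, ¬ (α = 0 ∧ β = 0) →
      0 < c * testMoment (gaussMoment x v) t₀ t₁ t₂ α β +
        -d * testMoment (gaussMoment y w) t₀ t₁ t₂ α β := by
    intro t₀ t₁ t₂ ht α β hαβ
    refine testMoment_combination_pos hv hw (fun z => ?_) (fun z hz => ?_) hqne hαβ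
    · rw [hg, mul_assoc]
      refine mul_nonneg (hpos z).le ?_
      by_cases h : q₀ + q₁ * z + q₂ * z ^ 2 = 0
      · simp [h]
      · exact (ht z h).le
    · by_contra h
      rw [hg, mul_assoc] at hz
      exact (mul_pos (hpos z) (ht z h)).ne' hz
  by_cases hD : 0 ≤ q₁ ^ 2 - 4 * q₀ * q₂
  · refine ⟨q₀, q₁, q₂, hD, hmain _ _ _ fun z hz => ?_⟩
    rcases lt_or_gt_of_ne hz with h | h
    · exact mul_pos_of_neg_of_neg (by linarith [Real.exp_lt_one_iff.2 h]) h
    · exact mul_pos (by linarith [Real.one_lt_exp_iff.2 h]) h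
  · push Not at hD
    have hq2 : q₂ ≠ 0 := by
      rintro rfl
      nlinarith [sq_nonneg q₁]
    refine ⟨q₂, 0, 0, by norm_num, hmain _ _ _ fun z _ => ?_⟩
    have hsign : 0 < q₂ * (q₀ + q₁ * z + q₂ * z ^ 2) := by
      nlinarith [sq_nonneg (2 * q₂ * z + q₁)]
    simp only [zero_mul, add_zero]
    rcases lt_or_gt_of_ne hq2 with h | h
    · have : q₀ + q₁ * z + q₂ * z ^ 2 < 0 := by nlinarith
      exact mul_pos_of_neg_of_neg (by linarith [Real.exp_lt_one_iff.2 this]) h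
    · have : 0 < q₀ + q₁ * z + q₂ * z ^ 2 := pos_of_mul_pos_right hsign h.le
      exact mul_pos (by linarith [Real.one_lt_exp_iff.2 this]) h

lemma exists_test_of_pos_var (x y : ℝ) {v w : ℝ≥0} (hv : v ≠ 0) (hw : w ≠ 0)
    {c d : ℝ} (hc : c ≠ 0) (hd : d ≠ 0) (hne : ¬ (x = y ∧ v = w ∧ c + d = 0)) :
    ∃ t₀ t₁ t₂ : ℝ, 0 ≤ t₁ ^ 2 - 4 * t₀ * t₂ ∧ ∀ α β : ℝ, ¬ (α = 0 ∧ β = 0) →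
      c * testMoment (gaussMoment x v) t₀ t₁ t₂ α β +
        d * testMoment (gaussMoment y w) t₀ t₁ t₂ α β ≠ 0 := by
  have hsame : ∀ {c d : ℝ}, 0 < c → 0 < d → ∀ α β : ℝ, ¬ (α = 0 ∧ β = 0) →
      0 < c * testMoment (gaussMoment x v) 1 0 0 α β +
        d * testMoment (gaussMoment y w) 1 0 0 α β := by
    intro c d hc hd α β hαβ
    have hpos : ∀ z, 0 < (c * gaussianPDFReal x v z + d * gaussianPDFReal y w z) *
        (1 + 0 * z + 0 * z ^ 2) := fun z => by
      have h1 := gaussianPDFReal_pos x v z hv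
      have h2 := gaussianPDFReal_pos y w z hw
      simp only [zero_mul, add_zero, mul_one]
      positivity
    exact testMoment_combination_pos (q₀ := 1) (q₁ := 0) (q₂ := 0) hv hw (fun z => (hpos z).le)
      (fun z hz => absurd hz (hpos z).ne') (by norm_num) hαβ
  rcases lt_or_gt_of_ne hc with hc | hc <;> rcases lt_or_gt_of_ne hd with hd | hd
  · refine ⟨1, 0, 0, by norm_num, fun α β hαβ => ?_⟩
    have := hsame (neg_pos.2 hc) (neg_pos.2 hd) α β hαβ
    intro h
    linarith
  · obtain ⟨t₀, t₁, t₂, hD, h⟩ := exists_test_of_opposite_sign x y hv hw (neg_pos.2 hc) hd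
      (fun h => hne ⟨h.1, h.2.1, by linarith [h.2.2]⟩)
    refine ⟨t₀, t₁, t₂, hD, fun α β hαβ h0 => ?_⟩
    have := h α β hαβ
    linarith
  · obtain ⟨t₀, t₁, t₂, hD, h⟩ := exists_test_of_opposite_sign x y hv hw hc (neg_pos.2 hd)
      (fun h => hne ⟨h.1, h.2.1, by linarith [h.2.2]⟩)
    refine ⟨t₀, t₁, t₂, hD, fun α β hαβ h0 => ?_⟩
    have := h α β hαβ
    linarith
  · exact ⟨1, 0, 0, by norm_num, fun α β hαβ => (hsame hc hd α β hαβ).ne'⟩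

lemma testMoment_dirac (x α β : ℝ) :
    testMoment (gaussMoment x 0) (x ^ 2) (-2 * x) 1 α β = 0 := by
  simp only [testMoment, gaussMoment_zero_var]
  ring

/-- The test polynomial with a double zero at the location of a point mass detects a
nondegenerate Gaussian. -/
lemma exists_test_of_zero_var (x y : ℝ) {w : ℝ≥0} (hw : w ≠ 0) (c : ℝ) {d : ℝ} (hd : d ≠ 0) :
    ∃ t₀ t₁ t₂ : ℝ, 0 ≤ t₁ ^ 2 - 4 * t₀ * t₂ ∧ ∀ α β : ℝ, ¬ (α = 0 ∧ β = 0) →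
      c * testMoment (gaussMoment x 0) t₀ t₁ t₂ α β +
        d * testMoment (gaussMoment y w) t₀ t₁ t₂ α β ≠ 0 := by
  refine ⟨x ^ 2, -2 * x, 1, by nlinarith, fun α β hαβ => ?_⟩
  rw [testMoment_dirac, mul_zero, zero_add]
  refine mul_ne_zero hd ?_
  have hsq : ∀ z : ℝ, x ^ 2 + -2 * x * z + 1 * z ^ 2 = (z - x) ^ 2 := fun z => by ring
  have h := testMoment_combination_pos (x := y) (y := y) (c := 1) (d := 0)
    (t₀ := x ^ 2) (t₁ := -2 * x) (t₂ := 1) (q₀ := x ^ 2) (q₁ := -2 * x) (q₂ := 1) hw hw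
    (fun z => ?_) (fun z hz => ?_) (by norm_num) hαβ
  · rw [one_mul, zero_mul, add_zero] at h
    exact h.ne'
  · rw [hsq, one_mul, zero_mul, add_zero]
    exact mul_nonneg (gaussianPDFReal_nonneg y w z) (sq_nonneg _)
  · rw [one_mul, zero_mul, add_zero] at hz
    exact (mul_eq_zero.1 hz).resolve_left (gaussianPDFReal_pos y w z hw).ne'

lemma exists_null_vector {r₀ r₁ r₂ : ℝ} (h : r₀ * r₂ ≤ r₁ ^ 2) :
    ∃ α β : ℝ, ¬ (α = 0 ∧ β = 0) ∧ r₂ * α ^ 2 + 2 * r₁ * α * β + r₀ * β ^ 2 = 0 := by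
  by_cases hr : r₀ = 0
  · exact ⟨0, 1, by norm_num, by simp [hr]⟩
  · refine ⟨r₀, -r₁ + √(r₁ ^ 2 - r₀ * r₂), fun h => hr h.1, ?_⟩
    have hs := Real.sq_sqrt (sub_nonneg.2 h)
    linear_combination r₀ * hs

/-- A Laguerre-type inequality: a polynomial `T z²` with only real zeros keeps this property under
the backward heat flow, so the induced binary quadratic form in `(α, β)` is isotropic. -/
lemma exists_testMoment_eq_zero (x : ℝ) {v t₀ t₁ t₂ : ℝ} (hv : v ≤ 0)
    (hD : 0 ≤ t₁ ^ 2 - 4 * t₀ * t₂) :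
    ∃ α β : ℝ, ¬ (α = 0 ∧ β = 0) ∧ testMoment (gaussMoment x v) t₀ t₁ t₂ α β = 0 := by
  obtain ⟨δ, rfl, hδ⟩ : ∃ δ, v = -δ ∧ 0 ≤ δ := ⟨-v, by ring, by linarith⟩
  set m := gaussMoment x (-δ) with hm
  have h : (t₀ * m 2 + t₁ * m 3 + t₂ * m 4) * (t₀ * m 4 + t₁ * m 5 + t₂ * m 6) ≤
      (t₀ * m 3 + t₁ * m 4 + t₂ * m 5) ^ 2 := by
    obtain ⟨a, ha⟩ : ∃ a, a = t₀ + t₁ * x + t₂ * x ^ 2 := ⟨_, rfl⟩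
    obtain ⟨b, hb⟩ : ∃ b, b = t₁ + 2 * t₂ * x := ⟨_, rfl⟩
    have hpos : 0 ≤ δ * ((x ^ 2 * a - 2 * x * δ * b) ^ 2 + 3 * δ ^ 2 * a ^ 2 +
        2 * δ ^ 2 * (x * b - 3 * δ * t₂) ^ 2 + 3 * δ ^ 3 * b ^ 2 +
        δ ^ 2 * (3 * x ^ 4 + 12 * x ^ 2 * δ + 27 * δ ^ 2) * t₂ ^ 2) +
        δ ^ 2 * (x ^ 4 + 6 * δ ^ 2) * (t₁ ^ 2 - 4 * t₀ * t₂) := by positivity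
    refine sub_nonneg.1 (hpos.trans_eq ?_)
    subst ha hb
    simp only [hm, gaussMoment]
    push_cast
    ring
  obtain ⟨α, β, hαβ, h0⟩ := exists_null_vector h
  refine ⟨α, β, hαβ, ?_⟩
  rw [testMoment]
  linear_combination h0

/-- A law of nonzero variance is not a combination of three point masses, one of them at the
origin, as far as the moments of order one to six are concerned. -/
lemma false_of_dirac_moments {x y z v b c d : ℝ} (hv : v ≠ 0) (hb : b ≠ 0)
    (h : ∀ k, 1 ≤ k → k ≤ 6 →
      b * gaussMoment x v k + c * gaussMoment y 0 k + d * gaussMoment z 0 k = 0) : False := by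
  simp only [gaussMoment_zero_var] at h
  have hC : ∀ j, j ≤ 3 → gaussMoment x v (j + 3) - (y + z) * gaussMoment x v (j + 2) +
      y * z * gaussMoment x v (j + 1) = 0 := by
    intro j hj
    have h1 := h (j + 1) (by omega) (by omega)
    have h2 := h (j + 2) (by omega) (by omega)
    have h3 := h (j + 3) (by omega) (by omega)
    refine mul_left_cancel₀ hb ?_
    linear_combination h3 - (y + z) * h2 + y * z * h1
  have e0 := hC 0 (by norm_num)
  have e1 := hC 1 (by norm_num)
  have e2 := hC 2 (by norm_num)
  have e3 := hC 3 (by norm_num)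
  simp only [gaussMoment] at e0 e1 e2 e3
  push_cast at e0 e1 e2 e3
  have d1 : 3 * (x ^ 2 + v) - 2 * (y + z) * x + y * z = 0 := by
    refine mul_left_cancel₀ hv ?_
    linear_combination e1 - x * e0
  have d2 : 6 * x - 2 * (y + z) = 0 := by
    refine mul_left_cancel₀ (pow_ne_zero 2 hv) ?_
    linear_combination e2 - (x ^ 2 + v) * e0 - 2 * x * v * d1
  have d3 : 6 * v ^ 3 = 0 := by
    linear_combination e3 - (x ^ 3 + 3 * x * v) * e0 - 3 * v * (x ^ 2 + v) * d1
      - 3 * x * v ^ 2 * d2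
  exact hv (by simpa using d3)

/-- Independence of the moments of four Gaussian laws, the second narrowest of which is normalized
to be the point mass at the origin. -/
lemma degenerate_of_moments {x y z u v w b c d : ℝ} (hu : u ≤ 0) (hv : 0 ≤ v) (hw : 0 ≤ w)
    (hb : b ≠ 0) (hc : c ≠ 0) (hd : d ≠ 0)
    (h : ∀ k, 1 ≤ k → k ≤ 6 →
      b * gaussMoment x u k + c * gaussMoment y v k + d * gaussMoment z w k = 0) :
    (u = 0 ∧ v = 0 ∧ w = 0) ∨ (y = z ∧ v = w ∧ c + d = 0) := by
  have hno : ¬ ∃ t₀ t₁ t₂ : ℝ, 0 ≤ t₁ ^ 2 - 4 * t₀ * t₂ ∧ ∀ α β : ℝ, ¬ (α = 0 ∧ β = 0) →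
      c * testMoment (gaussMoment y v) t₀ t₁ t₂ α β +
        d * testMoment (gaussMoment z w) t₀ t₁ t₂ α β ≠ 0 := by
    rintro ⟨t₀, t₁, t₂, hD, ht⟩
    obtain ⟨α, β, hαβ, h0⟩ := exists_testMoment_eq_zero x hu hD
    refine ht α β hαβ ?_
    have h2 := h 2 (by norm_num) (by norm_num)
    have h3 := h 3 (by norm_num) (by norm_num)
    have h4 := h 4 (by norm_num) (by norm_num)
    have h5 := h 5 (by norm_num) (by norm_num)
    have h6 := h 6 (by norm_num) (by norm_num)
    simp only [testMoment] at h0 ⊢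
    linear_combination t₀ * β ^ 2 * h2 + (t₁ * β ^ 2 + 2 * t₀ * α * β) * h3 +
      (t₂ * β ^ 2 + 2 * t₁ * α * β + t₀ * α ^ 2) * h4 +
      (2 * t₂ * α * β + t₁ * α ^ 2) * h5 + t₂ * α ^ 2 * h6 - b * h0
  lift v to ℝ≥0 using hv
  lift w to ℝ≥0 using hw
  by_cases hv0 : v = 0 <;> by_cases hw0 : w = 0
  · subst hv0 hw0
    by_cases hu0 : u = 0
    · exact Or.inl ⟨hu0, rfl, rfl⟩
    · exact (false_of_dirac_moments hu0 hb h).elim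
  · subst hv0
    exact (hno (exists_test_of_zero_var y z hw0 c hd)).elim
  · subst hw0
    obtain ⟨t₀, t₁, t₂, hD, ht⟩ := exists_test_of_zero_var z y hv0 d hc
    exact (hno ⟨t₀, t₁, t₂, hD, fun α β hαβ h0 => ht α β hαβ (by
      rw [add_comm]
      exact h0)⟩).elim
  · by_contra! hne
    exact hno (exists_test_of_pos_var y z hv0 hw0 hc hd fun h =>
      hne.2 h.1 (congrArg _ h.2.1) h.2.2)

lemma shifted_moments {a b c x y z u v w : ℝ}
    (h : ∀ k, 1 ≤ k → k ≤ 6 →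
      a * gaussMoment x u k + b * gaussMoment y v k + c * gaussMoment z w k = 0) :
    ∀ k, 1 ≤ k → k ≤ 6 →
      a * gaussMoment (x - y) (u - v) k + c * gaussMoment (z - y) (w - v) k +
        -(a + b + c) * gaussMoment (-y) (-v) k = 0 := by
  intro k hk1 hk6
  have h1 := h 1 (by norm_num) (by norm_num)
  have h2 := h 2 (by norm_num) (by norm_num)
  have h3 := h 3 (by norm_num) (by norm_num)
  have h4 := h 4 (by norm_num) (by norm_num)
  have h5 := h 5 (by norm_num) (by norm_num)
  have h6 := h 6 (by norm_num) (by norm_num)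
  clear h
  set m := gaussMoment (-y) (-v) with hm
  interval_cases k <;> simp only [hm, gaussMoment] at * <;> push_cast at *
  · linear_combination h1
  · linear_combination h2 + 2 * (-y) * h1
  · linear_combination h3 + 3 * (-y) * h2 + 3 * (y ^ 2 - v) * h1
  · linear_combination h4 + 4 * (-y) * h3 + 6 * (y ^ 2 - v) * h2 + 4 * (-y ^ 3 + 3 * y * v) * h1
  · linear_combination h5 + 5 * (-y) * h4 + 10 * (y ^ 2 - v) * h3 +
      10 * (-y ^ 3 + 3 * y * v) * h2 + 5 * (y ^ 4 - 6 * y ^ 2 * v + 3 * v ^ 2) * h1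
  · linear_combination h6 + 6 * (-y) * h5 + 15 * (y ^ 2 - v) * h4 +
      20 * (-y ^ 3 + 3 * y * v) * h3 + 15 * (y ^ 4 - 6 * y ^ 2 * v + 3 * v ^ 2) * h2 +
      6 * (-y ^ 5 + 10 * y ^ 3 * v - 15 * y * v ^ 2) * h1

/-- A mixture of three normal laws, ordered by variance, whose first six moments vanish is
trivial. -/
lemma means_eq_zero_of_moments {a b c x y z u v w : ℝ} (ha : 0 < a) (hb : 0 < b) (hc : 0 < c)
    (huv : u ≤ v) (hvw : v ≤ w)
    (h : ∀ k, 1 ≤ k → k ≤ 6 →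
      a * gaussMoment x u k + b * gaussMoment y v k + c * gaussMoment z w k = 0) :
    x = 0 ∧ y = 0 ∧ z = 0 := by
  have h2 := h 2 (by norm_num) (by norm_num)
  simp only [gaussMoment] at h2
  push_cast at h2
  have hsq : u = 0 → v = 0 → w = 0 → x = 0 ∧ y = 0 ∧ z = 0 := by
    rintro rfl rfl rfl
    have hx := mul_nonneg ha.le (sq_nonneg x)
    have hy := mul_nonneg hb.le (sq_nonneg y)
    have hz := mul_nonneg hc.le (sq_nonneg z)
    refine ⟨?_, ?_, ?_⟩
    · have : a * x ^ 2 = 0 := by linarith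
      simpa [ha.ne'] using this
    · have : b * y ^ 2 = 0 := by linarith
      simpa [hb.ne'] using this
    · have : c * z ^ 2 = 0 := by linarith
      simpa [hc.ne'] using this
  have hu : u ≤ 0 := by
    by_contra! hu
    have hx := mul_nonneg ha.le (sq_nonneg x)
    have hy := mul_nonneg hb.le (sq_nonneg y)
    have hz := mul_nonneg hc.le (sq_nonneg z)
    have := mul_pos ha hu
    have := mul_pos hb (hu.trans_le huv)
    have := mul_pos hc (hu.trans_le (huv.trans hvw))
    linarith
  rcases le_or_gt v 0 with hv | hv
  · have hne : -(a + b + c) ≠ 0 := (neg_neg_of_pos (by positivity)).ne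
    rcases degenerate_of_moments (sub_nonpos.2 huv) (sub_nonneg.2 hvw) (neg_nonneg.2 hv) ha.ne'
      hc.ne' hne (shifted_moments h) with h1 | h1
    · exact hsq (by linarith) (by linarith) (by linarith)
    · linarith [h1.2.2]
  · rcases degenerate_of_moments hu hv.le (hv.le.trans hvw) ha.ne' hb.ne' hc.ne' h with h1 | h1
    · exact absurd h1.2.1 hv.ne'
    · linarith [h1.2.2]

lemma barEq_three_eq_gaussMoment (p q1 q2 : Fin 3 → ℝ) {s : ℕ} (h1 : 1 ≤ s) (h6 : s ≤ 6) :
    s.factorial * barEq 3 p q1 q2 s = p 0 ^ 2 * gaussMoment (q1 0) (2 * q2 0) s +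
      p 1 ^ 2 * gaussMoment (q1 1) (2 * q2 1) s + p 2 ^ 2 * gaussMoment (q1 2) (2 * q2 2) s := by
  rw [barEq, Fin.sum_univ_three]
  interval_cases s <;>
    simp [Finset.sum_filter, Finset.sum_product, Finset.sum_range_succ, gaussMoment,
      Nat.factorial] <;> ring

lemma not_barSol_three_six : ¬ barSol 3 6 := by
  rintro ⟨p, q1, q2, hp, ⟨l, hl⟩, h⟩
  have hm : ∀ k, 1 ≤ k → k ≤ 6 → p 0 ^ 2 * gaussMoment (q1 0) (2 * q2 0) k +
      p 1 ^ 2 * gaussMoment (q1 1) (2 * q2 1) k +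
      p 2 ^ 2 * gaussMoment (q1 2) (2 * q2 2) k = 0 := fun k h1 h6 => by
    rw [← barEq_three_eq_gaussMoment p q1 q2 h1 h6, h k h1 h6, mul_zero]
  have hpos : ∀ l, 0 < p l ^ 2 := fun l => by
    have := hp l
    positivity
  suffices hz : q1 0 = 0 ∧ q1 1 = 0 ∧ q1 2 = 0 by
    fin_cases l
    exacts [hl hz.1, hl hz.2.1, hl hz.2.2]
  have key : ∀ i j k : Fin 3, 2 * q2 i ≤ 2 * q2 j → 2 * q2 j ≤ 2 * q2 k →
      (∀ n, p i ^ 2 * gaussMoment (q1 i) (2 * q2 i) n + p j ^ 2 * gaussMoment (q1 j) (2 * q2 j) n +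
        p k ^ 2 * gaussMoment (q1 k) (2 * q2 k) n =
        p 0 ^ 2 * gaussMoment (q1 0) (2 * q2 0) n + p 1 ^ 2 * gaussMoment (q1 1) (2 * q2 1) n +
        p 2 ^ 2 * gaussMoment (q1 2) (2 * q2 2) n) → q1 i = 0 ∧ q1 j = 0 ∧ q1 k = 0 :=
    fun i j k hij hjk hs => means_eq_zero_of_moments (hpos i) (hpos j) (hpos k) hij hjk
      fun n h1 h6 => (hs n).trans (hm n h1 h6)
  rcases le_total (2 * q2 0) (2 * q2 1) with h01 | h01 <;>
    rcases le_total (2 * q2 1) (2 * q2 2) with h12 | h12 <;>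
    rcases le_total (2 * q2 0) (2 * q2 2) with h02 | h02
  · exact key 0 1 2 h01 h12 fun n => by ring
  · exact key 0 1 2 h01 h12 fun n => by ring
  · have := key 0 2 1 h02 h12 fun n => by ring
    tauto
  · have := key 2 0 1 h02 h01 fun n => by ring
    tauto
  · have := key 1 0 2 h01 h02 fun n => by ring
    tauto
  · have := key 1 2 0 h12 h02 fun n => by ring
    tauto
  · have := key 2 1 0 h12 h01 fun n => by ring
    tauto
  · have := key 2 1 0 h12 h01 fun n => by ring
    tauto

/-- The three-point Gauss–Hermite rule. -/
lemma barSol_three_five : barSol 3 5 := by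
  refine ⟨![2, 1, 1], ![0, 1, -1], fun _ => -1 / 6, ?_, ⟨1, by simp⟩, fun s h1 h5 => ?_⟩
  · intro l
    fin_cases l <;> simp
  · have h := barEq_three_eq_gaussMoment ![2, 1, 1] ![0, 1, -1] (fun _ => -1 / 6) h1
      (h5.trans (by norm_num))
    refine (mul_eq_zero.1 (h.trans ?_)).resolve_left (by exact_mod_cast s.factorial_ne_zero)
    interval_cases s <;> simp [gaussMoment] <;> norm_num

lemma barSol.mono {m r s : ℕ} (h : barSol m s) (hrs : r ≤ s) : barSol m r := by
  obtain ⟨p, q1, q2, hp, hq, hs⟩ := h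
  exact ⟨p, q1, q2, hp, hq, fun k h1 hk => hs k h1 (hk.trans hrs)⟩

/-- `r̄(3) = 6`: the bar-system of order `(3, 6)` admits no non-trivial solution,
while the bar-system of order `(3, 5)` does admit a non-trivial solution. -/
theorem rbar_three_eq_six : rbar 3 = 6 ∧ ¬ barSol 3 6 ∧ barSol 3 5 := by
  refine ⟨?_, not_barSol_three_six, barSol_three_five⟩
  have hmem : 6 ∈ {r : ℕ | 1 ≤ r ∧ ¬ barSol 3 r} := ⟨by norm_num, not_barSol_three_six⟩
  refine le_antisymm (Nat.sInf_le hmem) (le_csInf ⟨6, hmem⟩ fun r hr => ?_)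
  by_contra! hlt
  exact hr.2 (barSol_three_five.mono (by omega))
end

section
/- r̃(3) = 6; that is, the tilde-system of order (3, 6) admits no non-trivial solution, while the tilde-system of order (3, 5) does admit a non-trivial solution (for instance p₁ = p₂ = p₃ = 1, q_{1,l} = q_{2,l} = q_{3,l} = 0 for l = 1,2,3, q_{4,1} = √3/3, q_{4,2} = −√3/3, q_{4,3} = 0, q_{5,1} = q_{5,2} = −1/6, q_{5,3} = 0). -/
/-- The index set `J_{ℓ₁,ℓ₂} = {α ∈ ℕ⁵ : α₁+2α₂+α₃ = ℓ₁, α₃+α₄+2α₅ = ℓ₂}`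
(as a finite set of quintuples). -/
def Jset (l1 l2 : ℕ) : Finset (ℕ × ℕ × ℕ × ℕ × ℕ) :=
  (Finset.range (l1 + 1) ×ˢ Finset.range (l1 + 1) ×ˢ Finset.range (l1 + 1) ×ˢ
      Finset.range (l2 + 1) ×ˢ Finset.range (l2 + 1)).filter
    (fun α => α.1 + 2 * α.2.1 + α.2.2.1 = l1 ∧ α.2.2.1 + α.2.2.2.1 + 2 * α.2.2.2.2 = l2)

/-- The `(ℓ₁, ℓ₂)`-equation of the tilde-system:
`Σ_{l=1}^m Σ_{α ∈ J_{ℓ₁,ℓ₂}} p_l² q_{1,l}^{α₁} ⋯ q_{5,l}^{α₅} / (α₁!⋯α₅!)`. -/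
noncomputable def tildeEq (m : ℕ) (p q1 q2 q3 q4 q5 : Fin m → ℝ) (l1 l2 : ℕ) : ℝ :=
  ∑ l : Fin m, ∑ α ∈ Jset l1 l2,
    p l ^ 2 * q1 l ^ α.1 * q2 l ^ α.2.1 * q3 l ^ α.2.2.1 * q4 l ^ α.2.2.2.1 *
        q5 l ^ α.2.2.2.2 /
      ((α.1.factorial : ℝ) * (α.2.1.factorial : ℝ) * (α.2.2.1.factorial : ℝ) *
        (α.2.2.2.1.factorial : ℝ) * (α.2.2.2.2.factorial : ℝ))

/-- The tilde-system of order `(m, r)` admits a non-trivial solution: there are reals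
`p_l, q_{1,l}, …, q_{5,l}` with all `p_l ≠ 0` and some `q_{4,l} ≠ 0` satisfying the
equations for all `ℓ₁, ℓ₂ ≥ 0` with `1 ≤ ℓ₁ + ℓ₂ ≤ r`. -/
def tildeSol (m r : ℕ) : Prop :=
  ∃ p q1 q2 q3 q4 q5 : Fin m → ℝ,
    (∀ l, p l ≠ 0) ∧ (∃ l, q4 l ≠ 0) ∧
    ∀ l1 l2 : ℕ, 1 ≤ l1 + l2 → l1 + l2 ≤ r → tildeEq m p q1 q2 q3 q4 q5 l1 l2 = 0

/-- `r̃(m)`: the smallest positive integer `r` such that the tilde-system of order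
`(m, r)` admits no non-trivial solution. -/
noncomputable def rtilde (m : ℕ) : ℕ := sInf {r : ℕ | 1 ≤ r ∧ ¬ tildeSol m r}

/-- `f` has at most `n` sign changes along increasing sequences of points of `s`. -/
def SignChangesLE (n : ℕ) (f : ℝ → ℝ) (s : Set ℝ) : Prop :=
  ∀ x : ℕ → ℝ, (∀ i ≤ n + 1, x i ∈ s) → (∀ i ≤ n, x i < x (i + 1)) →
    ¬ ∀ i ≤ n, f (x i) * f (x (i + 1)) < 0

namespace SignChangesLE

lemma congr_sign {n : ℕ} {f g c : ℝ → ℝ} {s : Set ℝ} (hc : ∀ x ∈ s, 0 < c x)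
    (hfg : ∀ x ∈ s, f x = c x * g x) (hg : SignChangesLE n g s) : SignChangesLE n f s := by
  intro x hxs hx hf
  refine hg x hxs hx fun i hi => ?_
  have h1 := hxs i (by omega)
  have h2 := hxs (i + 1) (by omega)
  have := hf i hi
  rw [hfg _ h1, hfg _ h2] at this
  have hp := mul_pos (hc _ h1) (hc _ h2)
  by_contra hcon
  have := mul_nonneg hp.le (not_lt.mp hcon)
  linarith

/-- Rolle: integrating creates at most one further sign change. -/
lemma of_hasDerivAt {n : ℕ} {f f' : ℝ → ℝ} {s : Set ℝ} (hs : s.OrdConnected)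
    (hf : ∀ x ∈ s, HasDerivAt f (f' x) x) (h : SignChangesLE n f' s) :
    SignChangesLE (n + 1) f s := by
  intro x hxs hx hfx
  have key : ∀ i, ∃ y, i ≤ n + 1 → x i < y ∧ y < x (i + 1) ∧ 0 < f' y * f (x (i + 1)) := by
    intro i
    by_cases hi : i ≤ n + 1
    · have hsub : Set.Icc (x i) (x (i + 1)) ⊆ s := hs.out (hxs i (by omega)) (hxs (i + 1) (by omega))
      obtain ⟨y, hy, hy'⟩ := exists_hasDerivAt_eq_slope f f' (hx i hi)
        (fun z hz => (hf z (hsub hz)).continuousAt.continuousWithinAt)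
        (fun z hz => hf z (hsub ⟨hz.1.le, hz.2.le⟩))
      refine ⟨y, fun _ => ⟨hy.1, hy.2, ?_⟩⟩
      have hpos : 0 < x (i + 1) - x i := sub_pos.mpr (hx i hi)
      rw [hy', div_mul_eq_mul_div]
      apply div_pos _ hpos
      nlinarith [hfx i hi, sq_nonneg (f (x (i + 1)))]
    · exact ⟨0, fun h => absurd h hi⟩
  choose y hy using key
  refine h y (fun i hi => ?_) (fun i hi => ?_) fun i hi => ?_
  · obtain ⟨h1, h2, -⟩ := hy i (by omega)
    exact hs.out (hxs i (by omega)) (hxs (i + 1) (by omega)) ⟨h1.le, h2.le⟩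
  · exact (hy i (by omega)).2.1.trans (hy (i + 1) (by omega)).1
  · have h1 := (hy i (by omega)).2.2
    have h2 := (hy (i + 1) (by omega)).2.2
    have h3 := hfx (i + 1) (by omega)
    by_contra hcon
    have h4 := mul_pos h1 h2
    have h5 := mul_nonneg (not_lt.mp hcon) (neg_nonneg.mpr h3.le)
    nlinarith

lemma comp_add {n : ℕ} {f : ℝ → ℝ} (c : ℝ) (h : SignChangesLE n (fun x => f (x + c)) Set.univ) :
    SignChangesLE n f Set.univ := by
  intro x _ hx hf
  exact h (fun i => x i - c) (fun _ _ => trivial) (fun i hi => by simpa using hx i hi)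
    (fun i hi => by simpa using hf i hi)

lemma comp_neg {n : ℕ} {f : ℝ → ℝ} (h : SignChangesLE n (fun x => f (-x)) Set.univ) :
    SignChangesLE n f Set.univ := by
  intro x _ hx hf
  refine h (fun i => -x (n + 1 - i)) (fun _ _ => trivial) (fun i hi => ?_) (fun i hi => ?_)
  · have := hx (n - i) (by omega)
    rw [show n - i + 1 = n + 1 - i by omega] at this
    rw [show n + 1 - (i + 1) = n - i by omega]
    exact neg_lt_neg this
  · have := hf (n - i) (by omega)
    rw [show n - i + 1 = n + 1 - i by omega, mul_comm] at this
    rw [show n + 1 - (i + 1) = n - i by omega]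
    simpa using this

/-- A sequence with one more point in front. -/
lemma false_of_cons {n : ℕ} {f : ℝ → ℝ} {s : Set ℝ} (h : SignChangesLE (n + 1) f s)
    {t : ℝ} {x : ℕ → ℝ} (ht : t ∈ s) (hxs : ∀ i ≤ n + 1, x i ∈ s) (htx : t < x 0)
    (hft : f t * f (x 0) < 0) (hx : ∀ i ≤ n, x i < x (i + 1))
    (hf : ∀ i ≤ n, f (x i) * f (x (i + 1)) < 0) : False := by
  refine h (fun i => Nat.casesOn i t x) (fun i hi => ?_) (fun i hi => ?_) fun i hi => ?_
  · cases i with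
    | zero => exact ht
    | succ i => exact hxs i (by omega)
  · cases i with
    | zero => exact htx
    | succ i => exact hx i (by omega)
  · cases i with
    | zero => exact hft
    | succ i => exact hf i (by omega)

/-- A continuous function with at most `n` sign changes has the sign of a polynomial of degree
at most `n`. -/
lemma exists_polynomial {n : ℕ} {f : ℝ → ℝ} (hf : Continuous f)
    (h : SignChangesLE n f Set.univ) :
    ∃ P : Polynomial ℝ, P ≠ 0 ∧ P.natDegree ≤ n ∧ ∀ x, 0 ≤ P.eval x * f x := by
  induction n generalizing f with
  | zero =>
    have key : ∀ a b, 0 ≤ f a * f b := by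
      intro a b
      by_contra hab
      push Not at hab
      rcases lt_trichotomy a b with hlt | heq | hlt
      · refine h (fun i => if i = 0 then a else b) (fun _ _ => trivial) ?_ ?_ <;>
          · intro i hi
            obtain rfl : i = 0 := by omega
            simpa
      · subst heq
        nlinarith [mul_self_nonneg (f a)]
      · refine h (fun i => if i = 0 then b else a) (fun _ _ => trivial) ?_ ?_ <;>
          · intro i hi
            obtain rfl : i = 0 := by omega
            simpa [mul_comm]
    by_cases h0 : ∀ x, f x = 0
    · exact ⟨1, one_ne_zero, by simp, fun x => by simp [h0 x]⟩
    · push Not at h0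
      obtain ⟨a, ha⟩ := h0
      exact ⟨Polynomial.C (f a), by simpa using ha, by simp, fun x => by simpa using key a x⟩
  | succ n ih =>
    by_cases hn : SignChangesLE n f Set.univ
    · obtain ⟨P, hP, hd, hPf⟩ := ih hf hn
      exact ⟨P, hP, hd.trans (Nat.le_succ n), hPf⟩
    · unfold SignChangesLE at hn
      push Not at hn
      obtain ⟨x, -, hx, hfx⟩ := hn
      have hx0 : f (x 0) ≠ 0 := fun h0 => by simpa [h0] using hfx 0 (Nat.zero_le n)
      set A : Set ℝ := {t | ∀ y ≤ t, 0 ≤ f (x 0) * f y} with hA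
      have hxA : x 0 ∈ A := by
        intro y hy
        by_contra hneg
        push Not at hneg
        have hne : y ≠ x 0 := by
          rintro rfl
          nlinarith [mul_self_nonneg (f (x 0))]
        exact h.false_of_cons trivial (fun _ _ => trivial) (lt_of_le_of_ne hy hne)
          (by linarith [mul_comm (f y) (f (x 0))]) hx hfx
      have hbdd : BddAbove A := by
        refine ⟨x 1, fun t ht => ?_⟩
        by_contra hlt
        push Not at hlt
        have := ht (x 1) hlt.le
        linarith [hfx 0 (Nat.zero_le n)]
      set z := sSup A with hz
      have hxz : x 0 ≤ z := le_csSup hbdd hxA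
      have hle : ∀ y < z, 0 ≤ f (x 0) * f y := by
        intro y hy
        obtain ⟨t, ht, hyt⟩ := exists_lt_of_lt_csSup ⟨x 0, hxA⟩ hy
        exact ht y hyt.le
      have hzz : 0 ≤ f (x 0) * f z := by
        have hc : Continuous fun y => f (x 0) * f y := continuous_const.mul hf
        have : z ∈ closure (Set.Iio z) := by rw [closure_Iio]; exact Set.mem_Iic.mpr le_rfl
        exact (isClosed_le continuous_const hc).closure_subset_iff.mpr (fun y hy => hle y hy) this
      have hright : ∀ y > z, ∃ t, z < t ∧ t < y ∧ f (x 0) * f t < 0 := by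
        intro y hy
        have hm : (z + y) / 2 ∉ A := fun hmem => by linarith [le_csSup hbdd hmem]
        simp only [hA, Set.mem_ofPred_eq, not_forall, not_le] at hm
        obtain ⟨t, hty, htf⟩ := hm
        refine ⟨t, ?_, by linarith, htf⟩
        by_contra htz
        rcases lt_or_eq_of_le (not_lt.mp htz) with h1 | h1
        · linarith [hle t h1]
        · rw [h1] at htf
          linarith
      have hV : SignChangesLE n (fun y => (y - z) * f y) Set.univ := by
        intro y _ hy hfy
        have hmono : ∀ i, 1 ≤ i → i ≤ n + 1 → y 1 ≤ y i := by
          intro i h1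
          induction i, h1 using Nat.le_induction with
          | base => exact fun _ => le_rfl
          | succ i hi ih' => exact fun hi' => (ih' (by omega)).trans (hy i (by omega)).le
        have hz1 : z < y 1 := by
          by_contra hcon
          push Not at hcon
          have h0 := hfy 0 (Nat.zero_le n)
          have hy0 := hy 0 (Nat.zero_le n)
          simp only [zero_add] at h0 hy0
          have e1 := hle (y 0) (hy0.trans_le hcon)
          have e2 : 0 ≤ f (x 0) * f (y 1) := by
            rcases lt_or_eq_of_le hcon with h1 | h1
            · exact hle _ h1
            · rw [h1]; exact hzz
          have e3 : 0 ≤ f (y 0) * f (y 1) := by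
            have : 0 ≤ (f (x 0) * f (x 0)) * (f (y 0) * f (y 1)) := by nlinarith [mul_nonneg e1 e2]
            exact nonneg_of_mul_nonneg_right this (mul_self_pos.mpr hx0)
          have e4 : 0 ≤ (y 0 - z) * (y 1 - z) :=
            mul_nonneg_of_nonpos_of_nonpos (by linarith) (by linarith)
          nlinarith [mul_nonneg e3 e4]
        have hgt : ∀ i, 1 ≤ i → i ≤ n + 1 → z < y i := fun i h1 h2 => hz1.trans_le (hmono i h1 h2)
        have hpos : ∀ i, 1 ≤ i → i ≤ n → f (y i) * f (y (i + 1)) < 0 := by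
          intro i h1 h2
          have a1 := hgt i h1 (by omega)
          have a2 := hgt (i + 1) (by omega) (by omega)
          have := hfy i h2
          by_contra hcon
          nlinarith [mul_nonneg (not_lt.mp hcon)
            (mul_nonneg (sub_pos.mpr a1).le (sub_pos.mpr a2).le)]
        have h01 : (y 0 - z) * f (y 0) * ((y 1 - z) * f (y 1)) < 0 := hfy 0 (Nat.zero_le n)
        -- Replace `y 0` by a point right of `z` where `f` has the sign opposite to `f (y 1)`.
        obtain ⟨u, hzu, huy, huf, hux⟩ : ∃ u, z < u ∧ u < y 1 ∧ f u * f (y 1) < 0 ∧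
            ∃ v, x 0 ≤ v ∧ v < u ∧ f v * f u < 0 := by
          rcases lt_trichotomy (y 0) z with hlt | heq | hgt0
          · obtain ⟨t, ht1, ht2, ht3⟩ := hright _ hz1
            have e1 := hle _ hlt
            have e2 : 0 < f (y 0) * f (y 1) := by
              by_contra hcon
              nlinarith [mul_nonneg (neg_nonneg.mpr (not_lt.mp hcon))
                (mul_nonneg (sub_pos.mpr hlt).le (sub_pos.mpr hz1).le)]
            have e3 : 0 < f (x 0) * f (y 0) := lt_of_le_of_ne e1 fun h0 => by
              rcases mul_eq_zero.mp h0.symm with h0 | h0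
              · exact hx0 h0
              · simp [h0] at e2
            refine ⟨t, ht1, ht2, ?_, x 0, le_rfl, hxz.trans_lt ht1, ht3⟩
            by_contra hcon
            have := mul_nonneg (mul_pos e3 e2).le (not_lt.mp hcon)
            have h5 : 0 < f (y 0) ^ 2 * f (y 1) ^ 2 := by
              have := mul_pos e2 e2
              nlinarith
            nlinarith [mul_pos h5 (neg_pos.mpr ht3)]
          · rw [heq] at h01
            simp at h01
          · have e2 : f (y 0) * f (y 1) < 0 := by
              by_contra hcon
              nlinarith [mul_nonneg (not_lt.mp hcon)
                (mul_nonneg (sub_pos.mpr hgt0).le (sub_pos.mpr hz1).le)]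
            refine ⟨y 0, hgt0, hy 0 (Nat.zero_le n), e2, ?_⟩
            by_cases hs : f (x 0) * f (y 0) < 0
            · exact ⟨x 0, le_rfl, hxz.trans_lt hgt0, hs⟩
            · obtain ⟨t, ht1, ht2, ht3⟩ := hright _ hgt0
              refine ⟨t, hxz.trans ht1.le, ht2, ?_⟩
              have e4 : f (y 0) ≠ 0 := fun h0 => by simp [h0] at e2
              have e3 : 0 < f (x 0) * f (y 0) := lt_of_le_of_ne (not_lt.mp hs)
                fun h0 => (mul_ne_zero hx0 e4) h0.symm
              by_contra hcon
              have h5 : 0 < f (x 0) ^ 2 := by positivity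
              nlinarith [mul_nonneg h5.le (not_lt.mp hcon), mul_pos e3 (neg_pos.mpr ht3)]
        obtain ⟨v, -, hvu, hvf⟩ := hux
        refine h.false_of_cons (t := v) (x := fun i => if i = 0 then u else y i) trivial
          (fun _ _ => trivial) (by simpa using hvu) (by simpa using hvf) (fun i hi => ?_)
          (fun i hi => ?_)
        · by_cases h0 : i = 0
          · subst h0; simpa using huy
          · simpa [h0] using hy i hi
        · by_cases h0 : i = 0
          · subst h0; simpa using huf
          · simpa [h0] using hpos i (by omega) hi
      obtain ⟨P, hP, hd, hPf⟩ := ih (f := fun y => (y - z) * f y) (by fun_prop) hV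
      refine ⟨P * (Polynomial.X - Polynomial.C z), mul_ne_zero hP (Polynomial.X_sub_C_ne_zero z),
        ?_, fun y => ?_⟩
      · refine Polynomial.natDegree_mul_le.trans ?_
        rw [Polynomial.natDegree_X_sub_C]
        omega
      · have := hPf y
        simp only [Polynomial.eval_mul, Polynomial.eval_sub, Polynomial.eval_X, Polynomial.eval_C]
        linarith [mul_assoc (P.eval y) (y - z) (f y)]

lemma neg {n : ℕ} {f : ℝ → ℝ} {s : Set ℝ} (h : SignChangesLE n (fun x => -f x) s) :
    SignChangesLE n f s :=
  fun x hxs hx hf => h x hxs hx fun i hi => by simpa using hf i hi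

lemma zero_of_nonpos {f : ℝ → ℝ} {s : Set ℝ} (h : ∀ x ∈ s, f x ≤ 0) : SignChangesLE 0 f s := by
  intro x hxs _ hf
  have := mul_nonneg_of_nonpos_of_nonpos (h _ (hxs 0 (by omega))) (h _ (hxs 1 (by omega)))
  linarith [hf 0 le_rfl]

lemma one_of_neg_stays {f : ℝ → ℝ} {s : Set ℝ}
    (h : ∀ x ∈ s, ∀ y ∈ s, x < y → f x < 0 → f y ≤ 0) : SignChangesLE 1 f s := by
  intro x hxs hx hf
  have h0 := hf 0 (by omega)
  have h1 := hf 1 le_rfl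
  rcases mul_neg_iff.mp h0 with ⟨_, h3⟩ | ⟨h2, h3⟩
  · have := h _ (hxs 1 (by omega)) _ (hxs 2 (by omega)) (hx 1 le_rfl) h3
    nlinarith
  · linarith [h _ (hxs 0 (by omega)) _ (hxs 1 (by omega)) (hx 0 (by omega)) h2]

lemma not_five {f : ℝ → ℝ} {s : Set ℝ} (h : SignChangesLE 3 f s) {a b c d e : ℝ}
    (ha : a ∈ s) (hb : b ∈ s) (hc : c ∈ s) (hd : d ∈ s) (he : e ∈ s)
    (hab : a < b) (hbc : b < c) (hcd : c < d) (hde : d < e)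
    (fab : f a * f b < 0) (fbc : f b * f c < 0) (fcd : f c * f d < 0) (fde : f d * f e < 0) :
    False := by
  refine h (fun i => match i with | 0 => a | 1 => b | 2 => c | 3 => d | _ => e)
    (fun i hi => ?_) (fun i hi => ?_) fun i hi => ?_ <;> interval_cases i <;> assumption

end SignChangesLE

/-- The function `tanh (D / 2)`, written through `E = exp D`. -/
lemma hasDerivAt_exp_sub_one_div {D : ℝ → ℝ} {D' x : ℝ} (hD : HasDerivAt D D' x) :
    HasDerivAt (fun x => (Real.exp (D x) - 1) / (Real.exp (D x) + 1))
      (2 * D' * Real.exp (D x) / (Real.exp (D x) + 1) ^ 2) x := by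
  have hpos : Real.exp (D x) + 1 ≠ 0 := by positivity
  refine ((hD.exp.sub_const 1).div (hD.exp.add_const 1) hpos).congr_deriv ?_
  ring

lemma hasDerivAt_exp_div_sq {D : ℝ → ℝ} {D' x : ℝ} (hD : HasDerivAt D D' x) :
    HasDerivAt (fun x => Real.exp (D x) / (Real.exp (D x) + 1) ^ 2)
      (D' * Real.exp (D x) * (1 - Real.exp (D x)) / (Real.exp (D x) + 1) ^ 3) x := by
  have hpos : Real.exp (D x) + 1 ≠ 0 := by positivity
  refine (hD.exp.div ((hD.exp.add_const 1).pow 2) (pow_ne_zero 2 hpos)).congr_deriv ?_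
  simp only [Pi.pow_apply]
  field_simp
  ring

lemma exp_sub_one_div_mono {u v : ℝ} (h : u ≤ v) :
    (Real.exp u - 1) / (Real.exp u + 1) ≤ (Real.exp v - 1) / (Real.exp v + 1) := by
  rw [div_le_div_iff₀ (by positivity) (by positivity)]
  nlinarith [Real.exp_le_exp.mpr h]

lemma exp_sub_one_div_lt_one (u : ℝ) : (Real.exp u - 1) / (Real.exp u + 1) < 1 := by
  rw [div_lt_one (by positivity)]
  linarith

lemma hasDerivAt_quadratic (a b c x : ℝ) :
    HasDerivAt (fun x : ℝ => a * x ^ 2 + b * x + c) (2 * a * x + b) x := by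
  refine ((((hasDerivAt_pow 2 x).const_mul a).add ((hasDerivAt_id x).const_mul b)).add_const
    c).congr_deriv ?_
  simp
  ring

lemma signChangesLE_linear_add_tanh_linear (σ τ d e : ℝ) :
    SignChangesLE 3 (fun x => σ * x + τ +
      d * ((Real.exp (d * x + e) - 1) / (Real.exp (d * x + e) + 1))) Set.univ := by
  have hD : ∀ x, HasDerivAt (fun x : ℝ => d * x + e) d x := fun x => by
    simpa using ((hasDerivAt_id x).const_mul d).add_const e
  have h0 : SignChangesLE 0 (fun x => -(d * (d * Real.exp (d * x + e)))) Set.univ :=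
    SignChangesLE.zero_of_nonpos fun x _ => by
      nlinarith [mul_nonneg (mul_self_nonneg d) (Real.exp_pos (d * x + e)).le]
  have h1 : SignChangesLE 1 (fun x => d * (1 - Real.exp (d * x + e))) Set.univ := by
    refine h0.of_hasDerivAt Set.ordConnected_univ fun x _ => ?_
    refine (((hD x).exp.const_sub 1).const_mul d).congr_deriv ?_
    ring
  by_cases hd : d = 0
  · subst hd
    have : SignChangesLE 2 (fun _ : ℝ => σ) Set.univ := by
      intro x _ _ hf
      have := hf 0 (by omega)
      nlinarith [mul_self_nonneg σ]
    refine this.of_hasDerivAt Set.ordConnected_univ fun x _ => ?_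
    simpa using ((hasDerivAt_id x).const_mul σ).add_const τ
  have h2 : SignChangesLE 2
      (fun x => σ + 2 * d ^ 2 * (Real.exp (d * x + e) / (Real.exp (d * x + e) + 1) ^ 2))
      Set.univ := by
    refine SignChangesLE.of_hasDerivAt
      (f' := fun x => 2 * d ^ 2 * (d * Real.exp (d * x + e) * (1 - Real.exp (d * x + e)) /
        (Real.exp (d * x + e) + 1) ^ 3)) Set.ordConnected_univ (fun x _ => ?_) ?_
    · exact ((hasDerivAt_exp_div_sq (hD x)).const_mul (2 * d ^ 2)).const_add σ
    · exact h1.congr_sign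
        (c := fun x => 2 * d ^ 2 * Real.exp (d * x + e) / (Real.exp (d * x + e) + 1) ^ 3)
        (fun x _ => by positivity) (fun x _ => by ring)
  refine h2.of_hasDerivAt Set.ordConnected_univ fun x _ => ?_
  refine ((((hasDerivAt_id x).const_mul σ).add_const τ).add
    ((hasDerivAt_exp_sub_one_div (hD x)).const_mul d)).congr_deriv ?_
  ring

lemma signChangesLE_linear_add_tanh_quadratic_Ioi {α : ℝ} (hα : 0 < α) (σ τ δ : ℝ) :
    SignChangesLE 3 (fun x => σ * x + τ + 2 * α * x *
      ((Real.exp (α * x ^ 2 + δ) - 1) / (Real.exp (α * x ^ 2 + δ) + 1))) (Set.Ioi 0) := by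
  have hD : ∀ x, HasDerivAt (fun x : ℝ => α * x ^ 2 + δ) (2 * α * x) x := fun x => by
    simpa using hasDerivAt_quadratic α 0 δ x
  have h1 : SignChangesLE 1 (fun x => 3 * (Real.exp (α * x ^ 2 + δ) + 1) +
      2 * α * x ^ 2 * (1 - Real.exp (α * x ^ 2 + δ))) (Set.Ioi 0) := by
    refine SignChangesLE.one_of_neg_stays fun x hx y hy hxy hneg => ?_
    rw [Set.mem_Ioi] at hx hy
    have hsq : α * x ^ 2 < α * y ^ 2 := by gcongr
    have hE : Real.exp (α * x ^ 2 + δ) ≤ Real.exp (α * y ^ 2 + δ) := by gcongr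
    have hE0 := Real.exp_pos (α * x ^ 2 + δ)
    set E := Real.exp (α * x ^ 2 + δ)
    set E' := Real.exp (α * y ^ 2 + δ)
    have hu : 0 < α * x ^ 2 := by positivity
    have hu3 : 3 < 2 * (α * x ^ 2) := by
      by_contra hcon
      nlinarith [mul_nonneg hE0.le (sub_nonneg.mpr (not_lt.mp hcon))]
    have hE1 : 1 < E := by
      by_contra hcon
      nlinarith [mul_nonneg hu.le (sub_nonneg.mpr (not_lt.mp hcon))]
    nlinarith [mul_nonneg (sub_nonneg.mpr hE) (show 0 ≤ 2 * (α * y ^ 2) - 3 by linarith),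
      mul_pos (sub_pos.mpr hsq) (sub_pos.mpr hE1)]
  have h2 : SignChangesLE 2 (fun x => 8 * α ^ 2 * (x ^ 3 *
      (Real.exp (α * x ^ 2 + δ) / (Real.exp (α * x ^ 2 + δ) + 1) ^ 2)) - τ) (Set.Ioi 0) := by
    refine SignChangesLE.of_hasDerivAt
      (f' := fun x => 8 * α ^ 2 * (3 * x ^ 2 *
        (Real.exp (α * x ^ 2 + δ) / (Real.exp (α * x ^ 2 + δ) + 1) ^ 2) + x ^ 3 *
        (2 * α * x * Real.exp (α * x ^ 2 + δ) * (1 - Real.exp (α * x ^ 2 + δ)) /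
          (Real.exp (α * x ^ 2 + δ) + 1) ^ 3))) Set.ordConnected_Ioi (fun x _ => ?_) ?_
    · refine ((((hasDerivAt_pow 3 x).mul
        (hasDerivAt_exp_div_sq (hD x))).const_mul (8 * α ^ 2)).sub_const τ).congr_deriv ?_
      norm_num
    · refine h1.congr_sign (c := fun x => 8 * α ^ 2 * x ^ 2 * Real.exp (α * x ^ 2 + δ) /
        (Real.exp (α * x ^ 2 + δ) + 1) ^ 3) (fun x hx => ?_) (fun x _ => ?_)
      · rw [Set.mem_Ioi] at hx
        positivity
      · have : Real.exp (α * x ^ 2 + δ) + 1 ≠ 0 := by positivity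
        field_simp
  have h3 : SignChangesLE 3 (fun x => σ + τ * x⁻¹ + 2 * α *
      ((Real.exp (α * x ^ 2 + δ) - 1) / (Real.exp (α * x ^ 2 + δ) + 1))) (Set.Ioi 0) := by
    refine SignChangesLE.of_hasDerivAt
      (f' := fun x => τ * (-(x ^ 2)⁻¹) + 2 * α * (2 * (2 * α * x) * Real.exp (α * x ^ 2 + δ) /
        (Real.exp (α * x ^ 2 + δ) + 1) ^ 2)) Set.ordConnected_Ioi (fun x hx => ?_) ?_
    · exact (((hasDerivAt_inv (ne_of_gt hx)).const_mul τ).const_add σ).add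
        ((hasDerivAt_exp_sub_one_div (hD x)).const_mul (2 * α))
    · refine h2.congr_sign (c := fun x => (x ^ 2)⁻¹) (fun x hx => ?_) (fun x hx => ?_) <;>
        rw [Set.mem_Ioi] at hx
      · positivity
      · field_simp
        ring
  refine h3.congr_sign (c := fun x => x) (fun x hx => hx) (fun x hx => ?_)
  rw [Set.mem_Ioi] at hx
  field_simp

lemma signChangesLE_linear_add_tanh_quadratic_of_pos {α τ : ℝ} (hα : 0 < α) (hτ : 0 < τ)
    (σ δ : ℝ) :
    SignChangesLE 3 (fun x => σ * x + τ + 2 * α * x *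
      ((Real.exp (α * x ^ 2 + δ) - 1) / (Real.exp (α * x ^ 2 + δ) + 1))) Set.univ := by
  have hIoi := signChangesLE_linear_add_tanh_quadratic_Ioi hα σ τ δ
  set T : ℝ → ℝ := fun x => (Real.exp (α * x ^ 2 + δ) - 1) / (Real.exp (α * x ^ 2 + δ) + 1)
    with hT
  set k : ℝ → ℝ := fun x => σ * x + τ + 2 * α * x * T x with hk
  have hTlt : ∀ x, T x < 1 := fun x => exp_sub_one_div_lt_one _
  have hcont : Continuous k := by
    have : ∀ x, Real.exp (α * x ^ 2 + δ) + 1 ≠ 0 := fun x => by positivity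
    simp only [hk, hT]
    fun_prop (disch := assumption)
  have hnear : ∀ y > 0, ∃ t, 0 < t ∧ t < y ∧ 0 < k t := by
    intro y hy
    have h0 : 0 < k 0 := by simpa [hk] using hτ
    have hev := hcont.continuousAt.eventually (lt_mem_nhds h0)
    obtain ⟨ε, hε, hball⟩ := Metric.eventually_nhds_iff.mp hev
    refine ⟨min (ε / 2) (y / 2), by positivity, (min_le_right _ _).trans_lt (by linarith), ?_⟩
    apply hball
    have : 0 < min (ε / 2) (y / 2) := by positivity
    rw [Real.dist_eq, sub_zero, abs_of_pos this]
    exact (min_le_left _ _).trans_lt (by linarith)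
  have hfar : 0 < σ + 2 * α → ∀ y, ∃ t, 0 < t ∧ y < t ∧ 0 < k t := by
    intro hl y
    have hlim : Filter.Tendsto (fun x : ℝ => Real.exp (α * x ^ 2 + δ)) Filter.atTop
        Filter.atTop := by
      refine Real.tendsto_exp_atTop.comp (Filter.tendsto_atTop_add_const_right _ _ ?_)
      exact (Filter.tendsto_pow_atTop two_ne_zero).const_mul_atTop hα
    obtain ⟨t, ht1, ht2, ht3⟩ := ((hlim.eventually_gt_atTop (4 * α / (σ + 2 * α))).and
      ((Filter.eventually_gt_atTop 0).and (Filter.eventually_gt_atTop y))).exists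
    refine ⟨t, ht2, ht3, ?_⟩
    have hm : 0 < σ + 2 * α * T t := by
      rw [div_lt_iff₀ hl] at ht1
      have hE := Real.exp_pos (α * t ^ 2 + δ)
      have : σ + 2 * α * T t = ((σ + 2 * α) * Real.exp (α * t ^ 2 + δ) + (σ + 2 * α) - 4 * α) /
          (Real.exp (α * t ^ 2 + δ) + 1) := by
        simp only [hT]
        field_simp
        ring
      rw [this]
      apply div_pos _ (by positivity)
      linarith
    have : k t = t * (σ + 2 * α * T t) + τ := by simp only [hk]; ring
    rw [this]
    positivity
  have hstay : ∀ x y, x < y → y ≤ 0 → 0 < k x → 0 < k y := by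
    intro x y hxy hy hkx
    have hTle : T y ≤ T x := by
      apply exp_sub_one_div_mono
      have : y ^ 2 ≤ x ^ 2 := by nlinarith
      gcongr
    have e1 : k x = τ + x * (σ + 2 * α * T x) := by simp only [hk]; ring
    have e2 : k y = τ + y * (σ + 2 * α * T y) := by simp only [hk]; ring
    rw [e2]
    rcases le_or_gt (σ + 2 * α * T y) 0 with h | h
    · linarith [mul_nonneg_of_nonpos_of_nonpos hy h]
    · have h1 : x * (σ + 2 * α * T y) ≤ y * (σ + 2 * α * T y) := by gcongr
      have h2 : x * (σ + 2 * α * T x) ≤ x * (σ + 2 * α * T y) :=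
        mul_le_mul_of_nonpos_left (by gcongr) (by linarith)
      linarith
  have hposleft : σ + 2 * α ≤ 0 → ∀ x ≤ 0, 0 < k x := by
    intro hl x hx
    have e1 : k x = τ + x * (σ + 2 * α * T x) := by simp only [hk]; ring
    have : σ + 2 * α * T x ≤ 0 := by nlinarith [hTlt x]
    linarith [mul_nonneg_of_nonpos_of_nonpos hx this]
  intro y _ hy hf
  have y01 : y 0 < y 1 := hy 0 (by omega)
  have y12 : y 1 < y 2 := hy 1 (by omega)
  have y23 : y 2 < y 3 := hy 2 (by omega)
  have y34 : y 3 < y 4 := hy 3 (by omega)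
  have f01 : k (y 0) * k (y 1) < 0 := hf 0 (by omega)
  have f12 : k (y 1) * k (y 2) < 0 := hf 1 (by omega)
  have f23 : k (y 2) * k (y 3) < 0 := hf 2 (by omega)
  have f34 : k (y 3) * k (y 4) < 0 := hf 3 (by omega)
  rcases le_or_gt (σ + 2 * α) 0 with hl | hl
  · have hleft := hposleft hl
    have p1 : 0 < y 1 := by
      by_contra hcon
      have := mul_pos (hleft (y 0) (by linarith)) (hleft (y 1) (by linarith))
      linarith
    obtain ⟨t, ht0, ht1, htf⟩ : ∃ t, 0 < t ∧ t < y 1 ∧ k t * k (y 1) < 0 := by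
      rcases le_or_gt (y 0) 0 with h0 | h0
      · obtain ⟨t, ht0, ht1, htf⟩ := hnear _ p1
        have := neg_of_mul_neg_right f01 (hleft _ h0).le
        exact ⟨t, ht0, ht1, mul_neg_of_pos_of_neg htf this⟩
      · exact ⟨y 0, h0, y01, f01⟩
    exact hIoi.not_five (a := t) ht0 (b := y 1) p1 (c := y 2) (p1.trans y12) (d := y 3)
      (p1.trans (y12.trans y23)) (e := y 4) (p1.trans (y12.trans (y23.trans y34)))
      ht1 y12 y23 y34 htf f12 f23 f34
  · have p2 : 0 < y 2 := by
      by_contra hcon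
      push Not at hcon
      rcases mul_neg_iff.mp f01 with ⟨h0, h1⟩ | ⟨h0, h1⟩
      · linarith [hstay _ _ y01 (by linarith) h0]
      · have := hstay _ _ y12 hcon h1
        nlinarith
    have p3 := p2.trans y23
    have p4 := p3.trans y34
    by_cases hs : k (y 2) < 0
    · have h3 : 0 < k (y 3) := pos_of_mul_neg_right f23 hs.le
      have h4 : k (y 4) < 0 := neg_of_mul_neg_right f34 h3.le
      obtain ⟨t, ht0, ht1, htf⟩ := hnear _ p2
      obtain ⟨r, hr0, hr1, hrf⟩ := hfar hl (y 4)
      exact hIoi.not_five (a := t) ht0 (b := y 2) p2 (c := y 3) p3 (d := y 4) p4 (e := r) hr0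
        ht1 y23 y34 hr1 (mul_neg_of_pos_of_neg htf hs) f23 f34 (mul_neg_of_neg_of_pos h4 hrf)
    · have h1 : k (y 1) < 0 := by
        by_contra hcon
        nlinarith
      have p1 : 0 < y 1 := by
        by_contra hcon
        have h0 : 0 < k (y 0) := pos_of_mul_neg_left f01 h1.le
        linarith [hstay _ _ y01 (not_lt.mp hcon) h0]
      obtain ⟨t, ht0, ht1, htf⟩ := hnear _ p1
      exact hIoi.not_five (a := t) ht0 (b := y 1) p1 (c := y 2) p2 (d := y 3) p3 (e := y 4) p4
        ht1 y12 y23 y34 (mul_neg_of_pos_of_neg htf h1) f12 f23 f34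

lemma signChangesLE_linear_add_tanh_quadratic {α : ℝ} (hα : 0 < α) (σ τ δ : ℝ) :
    SignChangesLE 3 (fun x => σ * x + τ + 2 * α * x *
      ((Real.exp (α * x ^ 2 + δ) - 1) / (Real.exp (α * x ^ 2 + δ) + 1))) Set.univ := by
  rcases lt_trichotomy τ 0 with hτ | hτ | hτ
  · refine (SignChangesLE.neg ?_).comp_neg
    have := signChangesLE_linear_add_tanh_quadratic_of_pos hα (neg_pos.mpr hτ) σ δ
    convert this using 2 with x
    rw [neg_sq]
    ring
  · -- A strict alternation survives a small perturbation of `τ`.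
    subst hτ
    intro y hyu hy hf
    set k : ℝ → ℝ := fun x => 2 * α * x *
      ((Real.exp (α * x ^ 2 + δ) - 1) / (Real.exp (α * x ^ 2 + δ) + 1)) with hk
    have hev : ∀ i : ℕ, ∀ᶠ τ : ℝ in nhds 0, i ≤ 3 →
        (σ * y i + τ + k (y i)) * (σ * y (i + 1) + τ + k (y (i + 1))) < 0 := by
      intro i
      by_cases hi : i ≤ 3
      · have hc : Continuous fun τ : ℝ =>
            (σ * y i + τ + k (y i)) * (σ * y (i + 1) + τ + k (y (i + 1))) := by fun_prop
        exact (hc.continuousAt.eventually (gt_mem_nhds (hf i hi))).mono fun τ h _ => h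
      · exact Filter.Eventually.of_forall fun τ h => absurd h hi
    have hall : ∀ᶠ τ : ℝ in nhds 0, ∀ i ∈ Finset.range 4, i ≤ 3 →
        (σ * y i + τ + k (y i)) * (σ * y (i + 1) + τ + k (y (i + 1))) < 0 :=
      (Filter.eventually_all_finset _).mpr fun i _ => hev i
    obtain ⟨τ, hτ, hτ0⟩ := ((hall.filter_mono nhdsWithin_le_nhds).and
      (self_mem_nhdsWithin (a := (0 : ℝ)) (s := Set.Ioi 0))).exists
    exact signChangesLE_linear_add_tanh_quadratic_of_pos hα hτ0 σ δ y hyu hy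
      fun i hi => hτ i (Finset.mem_range.mpr (by omega)) hi
  · exact signChangesLE_linear_add_tanh_quadratic_of_pos hα hτ σ δ

/-- If `k` controls the sign of the derivative of `exp Q₁ + exp Q₂ - 1`, then so it does for its
sign changes. -/
lemma signChangesLE_exp_add_exp_sub_one_of_tanh {Q₁ Q₂ L₁ L₂ : ℝ → ℝ}
    (h₁ : ∀ x, HasDerivAt Q₁ (L₁ x) x) (h₂ : ∀ x, HasDerivAt Q₂ (L₂ x) x)
    (h : SignChangesLE 3 (fun x => L₁ x + L₂ x + (L₁ x - L₂ x) *
      ((Real.exp (Q₁ x - Q₂ x) - 1) / (Real.exp (Q₁ x - Q₂ x) + 1))) Set.univ) :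
    SignChangesLE 4 (fun x => Real.exp (Q₁ x) + Real.exp (Q₂ x) - 1) Set.univ := by
  refine SignChangesLE.of_hasDerivAt (f' := fun x => Real.exp (Q₁ x) * L₁ x +
    Real.exp (Q₂ x) * L₂ x) Set.ordConnected_univ
    (fun x _ => ((h₁ x).exp.add (h₂ x).exp).sub_const 1) ?_
  refine h.congr_sign (c := fun x => Real.exp (Q₂ x) * (Real.exp (Q₁ x - Q₂ x) + 1) / 2)
    (fun x _ => by positivity) (fun x _ => ?_)
  have hpos : Real.exp (Q₁ x - Q₂ x) + 1 ≠ 0 := by positivity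
  have hE : Real.exp (Q₁ x) = Real.exp (Q₂ x) * Real.exp (Q₁ x - Q₂ x) := by
    rw [← Real.exp_add]; congr 1; ring
  rw [hE]
  field_simp
  ring

lemma signChangesLE_exp_add_exp_sub_one_of_lt {a₁ a₂ : ℝ} (ha : a₂ < a₁) (b₁ c₁ b₂ c₂ : ℝ) :
    SignChangesLE 4 (fun x => Real.exp (a₁ * x ^ 2 + b₁ * x + c₁) +
      Real.exp (a₂ * x ^ 2 + b₂ * x + c₂) - 1) Set.univ := by
  have hα : 0 < a₁ - a₂ := sub_pos.mpr ha
  set z := -(b₁ - b₂) / (2 * (a₁ - a₂)) with hz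
  have hb : b₂ + 2 * a₂ * z = b₁ + 2 * a₁ * z := by
    rw [hz]
    field_simp
    ring
  refine SignChangesLE.comp_add z ?_
  have key := signChangesLE_exp_add_exp_sub_one_of_tanh
    (hasDerivAt_quadratic a₁ (b₁ + 2 * a₁ * z) (a₁ * z ^ 2 + b₁ * z + c₁))
    (hasDerivAt_quadratic a₂ (b₁ + 2 * a₁ * z) (a₂ * z ^ 2 + b₂ * z + c₂)) ?_
  · convert key using 2 with x
    congr 2
    · congr 1; ring
    · rw [← hb]; congr 1; ring
  · convert signChangesLE_linear_add_tanh_quadratic hα (2 * (a₁ + a₂)) (2 * (b₁ + 2 * a₁ * z))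
      ((a₁ * z ^ 2 + b₁ * z + c₁) - (a₂ * z ^ 2 + b₂ * z + c₂)) using 2 with x
    have : a₁ * x ^ 2 + (b₁ + 2 * a₁ * z) * x + (a₁ * z ^ 2 + b₁ * z + c₁) -
        (a₂ * x ^ 2 + (b₁ + 2 * a₁ * z) * x + (a₂ * z ^ 2 + b₂ * z + c₂)) =
        (a₁ - a₂) * x ^ 2 + ((a₁ * z ^ 2 + b₁ * z + c₁) - (a₂ * z ^ 2 + b₂ * z + c₂)) := by ring
    rw [this]
    ring

/-- The sum of two exponentials of quadratic polynomials crosses the level `1` at most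
four times. -/
lemma signChangesLE_exp_add_exp_sub_one (a₁ b₁ c₁ a₂ b₂ c₂ : ℝ) :
    SignChangesLE 4 (fun x => Real.exp (a₁ * x ^ 2 + b₁ * x + c₁) +
      Real.exp (a₂ * x ^ 2 + b₂ * x + c₂) - 1) Set.univ := by
  rcases lt_trichotomy a₁ a₂ with h | h | h
  · simpa only [add_comm (Real.exp (a₁ * _ ^ 2 + b₁ * _ + c₁))] using
      signChangesLE_exp_add_exp_sub_one_of_lt h b₂ c₂ b₁ c₁
  · subst h
    refine signChangesLE_exp_add_exp_sub_one_of_tanh (hasDerivAt_quadratic a₁ b₁ c₁)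
      (hasDerivAt_quadratic a₁ b₂ c₂) ?_
    convert signChangesLE_linear_add_tanh_linear (4 * a₁) (b₁ + b₂) (b₁ - b₂) (c₁ - c₂)
      using 2 with x
    have : a₁ * x ^ 2 + b₁ * x + c₁ - (a₁ * x ^ 2 + b₂ * x + c₂) =
        (b₁ - b₂) * x + (c₁ - c₂) := by ring
    rw [this]
    ring
  · exact signChangesLE_exp_add_exp_sub_one_of_lt h b₁ c₁ b₂ c₂

lemma signChangesLE_exp_sub_one (a b c : ℝ) :
    SignChangesLE 2 (fun x => Real.exp (a * x ^ 2 + b * x + c) - 1) Set.univ := by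
  have h1 : SignChangesLE 1 (fun x : ℝ => 2 * a * x + b) Set.univ := by
    refine SignChangesLE.of_hasDerivAt (f' := fun _ => 2 * a) Set.ordConnected_univ
      (fun x _ => by simpa using ((hasDerivAt_id x).const_mul (2 * a)).add_const b) ?_
    intro x _ _ hf
    nlinarith [hf 0 le_rfl, mul_self_nonneg (2 * a)]
  refine SignChangesLE.of_hasDerivAt (f' := fun x => Real.exp (a * x ^ 2 + b * x + c) *
    (2 * a * x + b)) Set.ordConnected_univ
    (fun x _ => (hasDerivAt_quadratic a b c x).exp.sub_const 1) ?_
  exact h1.congr_sign (c := fun x => Real.exp (a * x ^ 2 + b * x + c))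
    (fun x _ => Real.exp_pos _) (fun x _ => rfl)

/-- The moments `E[(a + √u Z)^n]` of a Gaussian variable, as polynomials in the mean `a` and the
variance `u`; the variance is allowed to be negative here. -/
noncomputable def gaussianMoment (a u : ℝ) : ℕ → ℝ
  | 0 => 1
  | 1 => a
  | n + 2 => a * gaussianMoment a u (n + 1) + (n + 1) * u * gaussianMoment a u n

lemma hasDerivAt_gaussianMoment (u a : ℝ) (n : ℕ) :
    HasDerivAt (fun a => gaussianMoment a u (n + 1)) ((n + 1) * gaussianMoment a u n) a := by
  induction n using Nat.twoStepInduction with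
  | zero => simpa [gaussianMoment] using hasDerivAt_id' a
  | one =>
    have := ((hasDerivAt_id a).mul (hasDerivAt_id a)).add_const u
    simp only [gaussianMoment]
    refine (this.congr_deriv ?_).congr_of_eventuallyEq ?_
    · norm_num
      ring
    · filter_upwards with x
      simp
  | more n ih1 ih2 =>
    have := ((hasDerivAt_id a).mul ih2).add (ih1.const_mul ((n + 1 + 1 : ℝ) * u))
    refine (this.congr_deriv ?_).congr_of_eventuallyEq ?_
    · simp only [gaussianMoment, id]
      push_cast
      ring
    · filter_upwards with x
      simp [gaussianMoment]

open ProbabilityTheory MeasureTheory in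
lemma integral_pow_gaussianReal (μ : ℝ) (v : NNReal) (n : ℕ) :
    ∫ x, x ^ n ∂gaussianReal μ v = gaussianMoment μ v n := by
  have key : ∀ n, iteratedDeriv n (mgf id (gaussianReal μ v)) =
      fun t => gaussianMoment (μ + v * t) v n * Real.exp (μ * t + v * t ^ 2 / 2) := by
    intro n
    induction n with
    | zero => simp [gaussianMoment, mgf_id_gaussianReal]
    | succ n ih =>
      rw [iteratedDeriv_succ, ih]
      funext t
      have hlin : HasDerivAt (fun t : ℝ => μ + v * t) v t := by
        simpa using ((hasDerivAt_id t).const_mul (v : ℝ)).const_add μ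
      have hexp : HasDerivAt (fun t : ℝ => Real.exp (μ * t + v * t ^ 2 / 2))
          (Real.exp (μ * t + v * t ^ 2 / 2) * (μ + v * t)) t := by
        refine HasDerivAt.exp ?_
        convert hasDerivAt_quadratic ((v : ℝ) / 2) μ 0 t using 1
        · funext t; ring
        · ring
      cases n with
      | zero =>
        simp only [gaussianMoment, one_mul]
        rw [hexp.deriv]
        ring
      | succ n =>
        have hm : HasDerivAt (fun t : ℝ => gaussianMoment (μ + v * t) v (n + 1))
            ((n + 1) * gaussianMoment (μ + v * t) v n * v) t :=
          HasDerivAt.comp (h₂ := fun a => gaussianMoment a v (n + 1)) t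
            (hasDerivAt_gaussianMoment v (μ + v * t) n) hlin
        rw [(hm.fun_mul hexp).deriv]
        simp only [gaussianMoment]
        ring
  have h0 : (0 : ℝ) ∈ interior (integrableExpSet id (gaussianReal μ v)) := by simp
  have := iteratedDeriv_mgf_zero h0 n
  rw [key] at this
  simpa using this.symm

open ProbabilityTheory MeasureTheory in
lemma integrable_polynomial_gaussianReal (μ : ℝ) (v : NNReal) (P : Polynomial ℝ) :
    Integrable (fun x => P.eval x) (gaussianReal μ v) := by
  simp only [Polynomial.eval_eq_sum_range]
  refine integrable_finsetSum _ fun n _ => Integrable.const_mul ?_ _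
  exact integrable_pow_of_mem_interior_integrableExpSet (X := id) (by simp) n

open ProbabilityTheory MeasureTheory in
lemma integral_polynomial_gaussianReal (μ : ℝ) (v : NNReal) {P : Polynomial ℝ} {N : ℕ}
    (hP : P.natDegree < N) : ∫ x, P.eval x ∂gaussianReal μ v =
      ∑ n ∈ Finset.range N, P.coeff n * gaussianMoment μ v n := by
  simp only [Polynomial.eval_eq_sum_range' hP]
  rw [integral_finsetSum]
  · simp only [integral_const_mul, integral_pow_gaussianReal]
  · exact fun n _ => Integrable.const_mul
      (integrable_pow_of_mem_interior_integrableExpSet (X := id) (by simp) n) _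

open ProbabilityTheory MeasureTheory in
lemma integrable_polynomial_mul_gaussianPDFReal (μ : ℝ) (v : NNReal) (P : Polynomial ℝ) :
    Integrable (fun x => P.eval x * gaussianPDFReal μ v x) := by
  by_cases hv : v = 0
  · simp [hv]
  · have h := integrable_polynomial_gaussianReal μ v P
    rw [gaussianReal_of_var_ne_zero μ hv,
      integrable_withDensity_iff_integrable_smul' (measurable_gaussianPDF μ v)
        (by filter_upwards with x using by simp [gaussianPDF])] at h
    refine h.congr ?_
    filter_upwards with x
    simp [gaussianPDF, gaussianPDFReal_nonneg, mul_comm]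

open ProbabilityTheory MeasureTheory in
lemma integral_polynomial_mul_gaussianPDFReal {μ : ℝ} {v : NNReal} {P : Polynomial ℝ}
    (h : v = 0 → P.eval μ = 0) :
    ∫ x, P.eval x * gaussianPDFReal μ v x = ∫ x, P.eval x ∂gaussianReal μ v := by
  by_cases hv : v = 0
  · simp [hv, gaussianReal_zero_var, h hv]
  · rw [integral_gaussianReal_eq_integral_smul hv]
    simp [mul_comm]

open ProbabilityTheory in
lemma exists_mul_gaussianPDFReal_eq_exp {w : ℝ} (hw : 0 < w) (μ : ℝ) {v : NNReal} (hv : v ≠ 0) :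
    ∃ a b c : ℝ, ∀ x, w * gaussianPDFReal μ v x = Real.exp (a * x ^ 2 + b * x + c) := by
  have hv' : (0 : ℝ) < v := by positivity
  refine ⟨-(2 * v : ℝ)⁻¹, μ / v, -μ ^ 2 / (2 * v) + Real.log (w * (√(2 * Real.pi * v))⁻¹),
    fun x => ?_⟩
  have hquad : -(x - μ) ^ 2 / (2 * v) =
      -(2 * v : ℝ)⁻¹ * x ^ 2 + μ / v * x + -μ ^ 2 / (2 * v) := by
    field_simp
    ring
  rw [← add_assoc, Real.exp_add, Real.exp_log (by positivity), gaussianPDFReal, hquad]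
  ring

open ProbabilityTheory in
lemma continuous_gaussianPDFReal (μ : ℝ) (v : NNReal) : Continuous (gaussianPDFReal μ v) := by
  unfold gaussianPDFReal
  fun_prop

open MeasureTheory in
lemma integral_eq_zero_of_signChangesLE {n : ℕ} {f : ℝ → ℝ} (hf : Continuous f)
    (hsc : SignChangesLE n f Set.univ) {S : Polynomial ℝ} (hS : S ≠ 0)
    (hS0 : ∀ x, 0 ≤ S.eval x) (hint : ∀ P : Polynomial ℝ, Integrable fun x => P.eval x * f x)
    (h : ∀ R : Polynomial ℝ, R.natDegree ≤ n → ∫ x, (S * R).eval x * f x = 0) :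
    ∫ x, f x = 0 := by
  obtain ⟨R, hR, hRn, hR0⟩ := hsc.exists_polynomial hf
  have hpos : ∀ x, 0 ≤ (S * R).eval x * f x := fun x => by
    rw [Polynomial.eval_mul, mul_assoc]
    exact mul_nonneg (hS0 x) (hR0 x)
  have hae := (integral_eq_zero_iff_of_nonneg hpos (hint (S * R))).mp (h R hRn)
  have hroot : ∀ᵐ x : ℝ, (S * R).eval x ≠ 0 := by
    have hfin : {x | (S * R).IsRoot x}.Finite := Polynomial.finite_setOfPred_isRoot (mul_ne_zero hS hR)
    filter_upwards [hfin.measure_zero volume |> compl_mem_ae_iff.mpr] with x hx using hx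
  refine integral_eq_zero_of_ae ?_
  filter_upwards [hae, hroot] with x hx hx'
  exact (mul_eq_zero.mp hx).resolve_left hx'

open ProbabilityTheory MeasureTheory in
/-- A mixture of a Dirac mass and two Gaussian (or Dirac) laws cannot share its first six moments
with a non-degenerate centred Gaussian law. -/
lemma false_of_gaussianMoment_mixture {w₁ w₂ w₃ W a₁ a₂ a₃ : ℝ} {v₂ v₃ s : NNReal}
    (h₁ : 0 < w₁) (h₂ : 0 < w₂) (h₃ : 0 < w₃) (hs : s ≠ 0)
    (h : ∀ n ≤ 6, w₁ * gaussianMoment a₁ 0 n + w₂ * gaussianMoment a₂ v₂ n +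
      w₃ * gaussianMoment a₃ v₃ n = W * gaussianMoment 0 s n) : False := by
  have hW : w₁ + w₂ + w₃ = W := by simpa [gaussianMoment] using h 0 (by norm_num)
  have hWpos : 0 < W := by linarith
  set f : ℝ → ℝ := fun x => w₂ * gaussianPDFReal a₂ v₂ x + w₃ * gaussianPDFReal a₃ v₃ x -
    W * gaussianPDFReal 0 s x with hf
  have hfc : Continuous f := by
    have := continuous_gaussianPDFReal
    fun_prop
  have hi := fun (w μ : ℝ) (v : NNReal) (P : Polynomial ℝ) =>
    (integrable_polynomial_mul_gaussianPDFReal μ v P).const_mul w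
  have hexpand : ∀ (P : Polynomial ℝ) (x : ℝ), P.eval x * f x =
      w₂ * (P.eval x * gaussianPDFReal a₂ v₂ x) + w₃ * (P.eval x * gaussianPDFReal a₃ v₃ x) -
        W * (P.eval x * gaussianPDFReal 0 s x) := fun P x => by
    simp only [hf]
    ring
  have hint : ∀ P : Polynomial ℝ, Integrable fun x => P.eval x * f x := fun P => by
    simp only [hexpand]
    exact ((hi _ _ _ P).add (hi _ _ _ P)).sub (hi _ _ _ P)
  have hintegral : ∀ P : Polynomial ℝ, ∫ x, P.eval x * f x =
      w₂ * (∫ x, P.eval x * gaussianPDFReal a₂ v₂ x) +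
        w₃ * (∫ x, P.eval x * gaussianPDFReal a₃ v₃ x) -
        W * ∫ x, P.eval x * gaussianPDFReal 0 s x := fun P => by
    simp only [hexpand]
    rw [integral_sub ?_ (hi _ _ _ P), integral_add (hi _ _ _ P) (hi _ _ _ P)]
    · simp only [integral_const_mul]
    · exact (hi _ _ _ P).add (hi _ _ _ P)
  have hzero : ∀ P : Polynomial ℝ, P.natDegree ≤ 6 → P.eval a₁ = 0 → (v₂ = 0 → P.eval a₂ = 0) →
      (v₃ = 0 → P.eval a₃ = 0) → ∫ x, P.eval x * f x = 0 := fun P hP hP1 hP2 hP3 => by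
    have hP7 : P.natDegree < 7 := by omega
    have hdirac := integral_polynomial_gaussianReal a₁ 0 hP7
    rw [gaussianReal_zero_var, integral_dirac, hP1] at hdirac
    rw [hintegral, integral_polynomial_mul_gaussianPDFReal hP2,
      integral_polynomial_mul_gaussianPDFReal hP3,
      integral_polynomial_mul_gaussianPDFReal (fun h => absurd h hs),
      integral_polynomial_gaussianReal _ _ hP7, integral_polynomial_gaussianReal _ _ hP7,
      integral_polynomial_gaussianReal _ _ hP7]
    have hsum : ∑ n ∈ Finset.range 7, P.coeff n * (w₁ * gaussianMoment a₁ 0 n +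
        w₂ * gaussianMoment a₂ v₂ n + w₃ * gaussianMoment a₃ v₃ n) =
        ∑ n ∈ Finset.range 7, P.coeff n * (W * gaussianMoment 0 s n) :=
      Finset.sum_congr rfl fun n hn => by rw [h n (by simp at hn; omega)]
    simp only [mul_add, Finset.sum_add_distrib, mul_left_comm (P.coeff _),
      ← Finset.mul_sum] at hsum
    simp only [NNReal.coe_zero] at hdirac
    rw [← hdirac] at hsum
    linarith
  have hneg : (∫ x, f x) < 0 := by
    have hle : ∀ (μ : ℝ) (v : NNReal), (∫ x, gaussianPDFReal μ v x) ≤ 1 := fun μ v => by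
      by_cases hv : v = 0
      · simp [hv]
      · exact (integral_gaussianPDFReal_eq_one μ hv).le
    have := hintegral 1
    simp only [Polynomial.eval_one, one_mul, integral_gaussianPDFReal_eq_one 0 hs] at this
    rw [this]
    nlinarith [hle a₂ v₂, hle a₃ v₃]
  obtain ⟨A, B, C, hE⟩ := exists_mul_gaussianPDFReal_eq_exp hWpos 0 hs
  have hsq : ∀ a : ℝ, (Polynomial.X - Polynomial.C a : Polynomial ℝ) ^ 2 ≠ 0 := fun a =>
    pow_ne_zero 2 (Polynomial.X_sub_C_ne_zero a)
  have hdeg : ∀ a : ℝ, ((Polynomial.X - Polynomial.C a : Polynomial ℝ) ^ 2).natDegree = 2 :=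
    fun a => by simp
  refine hneg.ne ?_
  by_cases hv2 : v₂ = 0 <;> by_cases hv3 : v₃ = 0
  · refine integral_eq_zero_of_signChangesLE (n := 0) hfc (.zero_of_nonpos fun x _ => ?_)
      (mul_ne_zero (mul_ne_zero (hsq a₁) (hsq a₂)) (hsq a₃))
      (fun x => by simp only [Polynomial.eval_mul, Polynomial.eval_pow]; positivity) hint
      fun R hR => hzero _ ?_ (by simp) (by simp) (by simp)
    · simp only [hf, hE, hv2, hv3, gaussianPDFReal_zero_var, Pi.zero_apply]
      linarith [Real.exp_pos (A * x ^ 2 + B * x + C)]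
    · refine Polynomial.natDegree_mul_le.trans ((add_le_add (Polynomial.natDegree_mul_le.trans
        (add_le_add_left Polynomial.natDegree_mul_le _)) hR).trans ?_)
      rw [hdeg, hdeg, hdeg]
  · obtain ⟨A₃, B₃, C₃, hE₃⟩ := exists_mul_gaussianPDFReal_eq_exp h₃ a₃ hv3
    refine integral_eq_zero_of_signChangesLE (n := 2) hfc ?_ (mul_ne_zero (hsq a₁) (hsq a₂))
      (fun x => by simp only [Polynomial.eval_mul, Polynomial.eval_pow]; positivity) hint
      fun R hR => hzero _ ?_ (by simp) (by simp) (by simp [hv3])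
    · refine (signChangesLE_exp_sub_one (A₃ - A) (B₃ - B)
        (C₃ - C)).congr_sign (c := fun x => Real.exp (A * x ^ 2 + B * x + C))
        (fun x _ => Real.exp_pos _) fun x _ => ?_
      simp only [hf, hE, hE₃, hv2, gaussianPDFReal_zero_var, Pi.zero_apply]
      rw [mul_sub, ← Real.exp_add]
      ring_nf
    · refine Polynomial.natDegree_mul_le.trans ((add_le_add Polynomial.natDegree_mul_le hR).trans ?_)
      rw [hdeg, hdeg]
  · obtain ⟨A₂, B₂, C₂, hE₂⟩ := exists_mul_gaussianPDFReal_eq_exp h₂ a₂ hv2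
    refine integral_eq_zero_of_signChangesLE (n := 2) hfc ?_ (mul_ne_zero (hsq a₁) (hsq a₃))
      (fun x => by simp only [Polynomial.eval_mul, Polynomial.eval_pow]; positivity) hint
      fun R hR => hzero _ ?_ (by simp) (by simp [hv2]) (by simp)
    · refine (signChangesLE_exp_sub_one (A₂ - A) (B₂ - B)
        (C₂ - C)).congr_sign (c := fun x => Real.exp (A * x ^ 2 + B * x + C))
        (fun x _ => Real.exp_pos _) fun x _ => ?_
      simp only [hf, hE, hE₂, hv3, gaussianPDFReal_zero_var, Pi.zero_apply]
      rw [mul_sub, ← Real.exp_add]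
      ring_nf
    · refine Polynomial.natDegree_mul_le.trans ((add_le_add Polynomial.natDegree_mul_le hR).trans ?_)
      rw [hdeg, hdeg]
  · obtain ⟨A₂, B₂, C₂, hE₂⟩ := exists_mul_gaussianPDFReal_eq_exp h₂ a₂ hv2
    obtain ⟨A₃, B₃, C₃, hE₃⟩ := exists_mul_gaussianPDFReal_eq_exp h₃ a₃ hv3
    refine integral_eq_zero_of_signChangesLE (n := 4) hfc ?_ (hsq a₁)
      (fun x => by simpa using sq_nonneg _) hint fun R hR => ?_
    · refine (signChangesLE_exp_add_exp_sub_one (A₂ - A) (B₂ - B) (C₂ - C) (A₃ - A) (B₃ - B)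
        (C₃ - C)).congr_sign (c := fun x => Real.exp (A * x ^ 2 + B * x + C))
        (fun x _ => Real.exp_pos _) fun x _ => ?_
      simp only [hf, hE, hE₂, hE₃]
      rw [mul_sub, mul_add, ← Real.exp_add, ← Real.exp_add]
      ring_nf
    · refine hzero _ (Polynomial.natDegree_mul_le.trans ?_) (by simp) (by simp [hv2]) (by simp [hv3])
      rw [hdeg]
      omega

lemma forall_eq_zero_of_gaussianMoment_of_le {w₁ w₂ w₃ a₁ a₂ a₃ u₁ u₂ u₃ : ℝ}
    (h₁ : 0 < w₁) (h₂ : 0 < w₂) (h₃ : 0 < w₃) (h₁₂ : u₁ ≤ u₂) (h₁₃ : u₁ ≤ u₃)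
    (h : ∀ n, 1 ≤ n → n ≤ 6 → w₁ * gaussianMoment a₁ u₁ n + w₂ * gaussianMoment a₂ u₂ n +
      w₃ * gaussianMoment a₃ u₃ n = 0) : a₁ = 0 ∧ a₂ = 0 ∧ a₃ = 0 := by
  have e₁ := h 1 (by norm_num) (by norm_num)
  have e₂ := h 2 (by norm_num) (by norm_num)
  have e₃ := h 3 (by norm_num) (by norm_num)
  have e₄ := h 4 (by norm_num) (by norm_num)
  have e₅ := h 5 (by norm_num) (by norm_num)
  have e₆ := h 6 (by norm_num) (by norm_num)
  simp only [gaussianMoment] at e₁ e₂ e₃ e₄ e₅ e₆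
  norm_num at e₁ e₂ e₃ e₄ e₅ e₆
  rcases le_or_gt 0 u₁ with hu | hu
  · have hu₂ := hu.trans h₁₂
    have hu₃ := hu.trans h₁₃
    have := mul_nonneg h₁.le hu
    have := mul_nonneg h₂.le hu₂
    have := mul_nonneg h₃.le hu₃
    have := mul_nonneg h₁.le (mul_self_nonneg a₁)
    have := mul_nonneg h₂.le (mul_self_nonneg a₂)
    have := mul_nonneg h₃.le (mul_self_nonneg a₃)
    have k₁ : w₁ * (a₁ * a₁) = 0 := by linarith
    have k₂ : w₂ * (a₂ * a₂) = 0 := by linarith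
    have k₃ : w₃ * (a₃ * a₃) = 0 := by linarith
    simpa [h₁.ne', h₂.ne', h₃.ne'] using And.intro k₁ (And.intro k₂ k₃)
  · exfalso
    refine false_of_gaussianMoment_mixture (a₁ := a₁) (a₂ := a₂) (a₃ := a₃) (W := w₁ + w₂ + w₃)
      (v₂ := (u₂ - u₁).toNNReal) (v₃ := (u₃ - u₁).toNNReal) (s := (-u₁).toNNReal)
      h₁ h₂ h₃ (by simpa using hu) fun n hn => ?_
    · rw [Real.coe_toNNReal _ (sub_nonneg.mpr h₁₂), Real.coe_toNNReal _ (sub_nonneg.mpr h₁₃),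
        Real.coe_toNNReal _ (neg_nonneg.mpr hu.le)]
      interval_cases n <;> simp only [gaussianMoment] <;> norm_num
      · linear_combination e₁
      · linear_combination e₂
      · linear_combination e₃ - 3 * u₁ * e₁
      · linear_combination e₄ - 6 * u₁ * e₂
      · linear_combination e₅ - 10 * u₁ * e₃ + 15 * u₁ ^ 2 * e₁
      · linear_combination e₆ - 15 * u₁ * e₄ + 45 * u₁ ^ 2 * e₂

lemma forall_eq_zero_of_gaussianMoment {w₁ w₂ w₃ a₁ a₂ a₃ u₁ u₂ u₃ : ℝ}
    (h₁ : 0 < w₁) (h₂ : 0 < w₂) (h₃ : 0 < w₃)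
    (h : ∀ n, 1 ≤ n → n ≤ 6 → w₁ * gaussianMoment a₁ u₁ n + w₂ * gaussianMoment a₂ u₂ n +
      w₃ * gaussianMoment a₃ u₃ n = 0) : a₁ = 0 ∧ a₂ = 0 ∧ a₃ = 0 := by
  by_cases c₁ : u₁ ≤ u₂ ∧ u₁ ≤ u₃
  · exact forall_eq_zero_of_gaussianMoment_of_le h₁ h₂ h₃ c₁.1 c₁.2 h
  by_cases c₂ : u₂ ≤ u₁ ∧ u₂ ≤ u₃
  · have := forall_eq_zero_of_gaussianMoment_of_le (a₁ := a₂) (a₂ := a₁) (a₃ := a₃) h₂ h₁ h₃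
      c₂.1 c₂.2 fun n hn hn' => by linarith [h n hn hn']
    tauto
  · have hc : u₃ ≤ u₁ ∧ u₃ ≤ u₂ := by grind
    have := forall_eq_zero_of_gaussianMoment_of_le (a₁ := a₃) (a₂ := a₁) (a₃ := a₂) h₃ h₁ h₂
      hc.1 hc.2 fun n hn hn' => by linarith [h n hn hn']
    tauto

lemma sum_Jset_zero (p x₁ x₂ x₃ a b : ℝ) {n : ℕ} (hn : 1 ≤ n) (hn' : n ≤ 6) :
    ∑ α ∈ Jset 0 n, p ^ 2 * x₁ ^ α.1 * x₂ ^ α.2.1 * x₃ ^ α.2.2.1 * a ^ α.2.2.2.1 *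
        b ^ α.2.2.2.2 /
      ((α.1.factorial : ℝ) * (α.2.1.factorial : ℝ) * (α.2.2.1.factorial : ℝ) *
        (α.2.2.2.1.factorial : ℝ) * (α.2.2.2.2.factorial : ℝ)) =
      p ^ 2 * gaussianMoment a (2 * b) n / n.factorial := by
  have j₁ : Jset 0 1 = {(0, 0, 0, 1, 0)} := by decide
  have j₂ : Jset 0 2 = {(0, 0, 0, 2, 0), (0, 0, 0, 0, 1)} := by decide
  have j₃ : Jset 0 3 = {(0, 0, 0, 3, 0), (0, 0, 0, 1, 1)} := by decide
  have j₄ : Jset 0 4 = {(0, 0, 0, 4, 0), (0, 0, 0, 2, 1), (0, 0, 0, 0, 2)} := by decide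
  have j₅ : Jset 0 5 = {(0, 0, 0, 5, 0), (0, 0, 0, 3, 1), (0, 0, 0, 1, 2)} := by decide
  have j₆ : Jset 0 6 =
      {(0, 0, 0, 6, 0), (0, 0, 0, 4, 1), (0, 0, 0, 2, 2), (0, 0, 0, 0, 3)} := by decide
  interval_cases n <;> simp only [j₁, j₂, j₃, j₄, j₅, j₆] <;>
    simp [gaussianMoment, Nat.factorial] <;> ring

lemma tildeEq_three_zero (p q1 q2 q3 q4 q5 : Fin 3 → ℝ) {n : ℕ} (hn : 1 ≤ n) (hn' : n ≤ 6) :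
    tildeEq 3 p q1 q2 q3 q4 q5 0 n = (p 0 ^ 2 * gaussianMoment (q4 0) (2 * q5 0) n +
      p 1 ^ 2 * gaussianMoment (q4 1) (2 * q5 1) n +
      p 2 ^ 2 * gaussianMoment (q4 2) (2 * q5 2) n) / n.factorial := by
  simp only [tildeEq, sum_Jset_zero _ _ _ _ _ _ hn hn', Fin.sum_univ_three]
  ring

lemma not_tildeSol_three_six : ¬ tildeSol 3 6 := by
  rintro ⟨p, q1, q2, q3, q4, q5, hp, ⟨l, hl⟩, h⟩
  have hpos : ∀ l, 0 < p l ^ 2 := fun l => by have := hp l; positivity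
  obtain ⟨h0, h1, h2⟩ := forall_eq_zero_of_gaussianMoment (hpos 0) (hpos 1) (hpos 2)
    (a₁ := q4 0) (a₂ := q4 1) (a₃ := q4 2) (u₁ := 2 * q5 0) (u₂ := 2 * q5 1) (u₃ := 2 * q5 2)
    fun n hn hn' => by
      have := h 0 n (by omega) (by omega)
      rw [tildeEq_three_zero _ _ _ _ _ _ hn hn', div_eq_zero_iff] at this
      exact this.resolve_right (by positivity)
  fin_cases l <;> simp_all

lemma tildeSol_three_five : tildeSol 3 5 := by
  refine ⟨fun _ => 1, fun _ => 0, fun _ => 0, fun _ => 0, ![1, -1, 0],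
    ![-1 / 2 + √2 / 6, -1 / 2 + √2 / 6, -√2 / 3], fun _ => one_ne_zero, ⟨0, by simp⟩,
    fun l1 l2 h1 h5 => ?_⟩
  rcases Nat.eq_zero_or_pos l1 with rfl | hl1
  · have h2 : √2 ^ 2 = 2 := Real.sq_sqrt (by norm_num)
    rw [tildeEq_three_zero _ _ _ _ _ _ (by omega) (by omega), div_eq_zero_iff]
    left
    have hn : 1 ≤ l2 := by omega
    have hn' : l2 ≤ 5 := by omega
    interval_cases l2 <;> simp [gaussianMoment] <;> grind
  · refine Finset.sum_eq_zero fun l _ => Finset.sum_eq_zero fun α hα => ?_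
    have hα' := (Finset.mem_filter.mp hα).2.1
    have : α.1 ≠ 0 ∨ α.2.1 ≠ 0 ∨ α.2.2.1 ≠ 0 := by omega
    rcases this with h | h | h <;> simp [zero_pow h]

lemma tildeSol.mono {m r r' : ℕ} (hr : r ≤ r') (h : tildeSol m r') : tildeSol m r := by
  obtain ⟨p, q1, q2, q3, q4, q5, hp, hq, h⟩ := h
  exact ⟨p, q1, q2, q3, q4, q5, hp, hq, fun l1 l2 h1 h2 => h l1 l2 h1 (h2.trans hr)⟩

/-- `r̃(3) = 6`: the tilde-system of order `(3, 6)` admits no non-trivial solution,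
while the tilde-system of order `(3, 5)` does admit a non-trivial solution. -/
theorem rtilde_three_eq_six : rtilde 3 = 6 ∧ ¬ tildeSol 3 6 ∧ tildeSol 3 5 := by
  refine ⟨le_antisymm (Nat.sInf_le ⟨by norm_num, not_tildeSol_three_six⟩) ?_,
    not_tildeSol_three_six, tildeSol_three_five⟩
  refine le_csInf ⟨6, by norm_num, not_tildeSol_three_six⟩ fun r hr => ?_
  by_contra hlt
  exact hr.2 (tildeSol_three_five.mono (by omega))
end
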